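/- Let m̂ ∈ P₂(ℝ^d), φ ∈ UC_m̂, and let {Q_i}_{i∈ℤ} ⊂ (0,∞), {κ_i}_{i∈ℤ} ⊂ (0,1] satisfy 2Q_i ≤ 𝓡(Q_{i+1}) and G_{Q_i}^{κ_i} ⊆ B_{Q_i}(m̂) for all i, and set H_i = G_{Q_{i+1}}^{κ_{i+1}} \ G_{Q_i}^{κ_i}, assuming ∪_{i∈ℤ} H_i ∪ {m̂} = P₂(ℝ^d). For each i ∈ ℤ let δ_i > 0 and let k_i : P₂(ℝ^d) → U be a feedback with the one-step invariance property: for every m₀ ∈ H_{i−1}, every τ ∈ (0,δ_i], every W₂-continuous solution of the continuity equation on [0,τ] with constant control k_i(m₀) starting from m₀ remains in G_{Q_i}^{κ_i}. Define the global feedback k̂ by k̂(m) = k_i(m) for m ∈ H_{i−1} and k̂(m̂) = u₀ (an arbitrary fixed control). Fix i ∈ ℤ, let C₂(Q_i) = C₁e^{C₁δ_i}(1 + 2(C₁δ_i + ς₂(m̂) + Q_i)e^{2C₁δ_i}), let 0 < δ̂ < min{δ_i, Q_{i−1}/C₂(Q_i)} and θ ∈ Θ(δ̂, min{δ_i, Q_{i−1}/C₂(Q_i)}).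 Then every θ-trajectory under k̂ starting from any m_* ∈ G_{Q_i}^{κ_i} remains in G_{Q_i}^{κ_i} for all t ≥ 0. -/

import Mathlib

open MeasureTheory Set Filter Topology
open scoped ENNReal NNReal InnerProductSpace

noncomputable section

/-- `ℝ^d` with the Euclidean structure. -/
abbrev Ed (d : ℕ) : Type := EuclideanSpace ℝ (Fin d)

/-- A Borel probability measure with finite second moment. -/
def IsP2Meas {E : Type*} [NormedAddCommGroup E] [MeasurableSpace E] (μ : Measure E) : Prop :=
  IsProbabilityMeasure μ ∧ ∫⁻ x, (‖x‖₊ : ℝ≥0∞) ^ 2 ∂μ < ⊤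

/-- The Wasserstein space `P₂(ℝ^d)` of Borel probability measures with finite second moment. -/
def P2 (d : ℕ) : Type := {μ : Measure (Ed d) // IsP2Meas μ}

/-- `ς₂(μ)`, the square root of the second moment of `μ`. -/
def varsigma2 {d : ℕ} (μ : P2 d) : ℝ :=
  Real.sqrt (∫⁻ x, (‖x‖₊ : ℝ≥0∞) ^ 2 ∂μ.1).toReal

/-- `π` is a plan (coupling) between `μ` and `ν`. -/
def IsCoupling {d : ℕ} (π : Measure (Ed d × Ed d)) (μ ν : P2 d) : Prop :=
  π.map Prod.fst = μ.1 ∧ π.map Prod.snd = ν.1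

/-- The quadratic transport cost of a plan. -/
def Wcost {d : ℕ} (π : Measure (Ed d × Ed d)) : ℝ≥0∞ :=
  ∫⁻ p, (‖p.1 - p.2‖₊ : ℝ≥0∞) ^ 2 ∂π

/-- The 2-Wasserstein distance. -/
def W2 {d : ℕ} (μ ν : P2 d) : ℝ :=
  Real.sqrt (⨅ π ∈ {π : Measure (Ed d × Ed d) | IsCoupling π μ ν}, Wcost π).toReal

/-- `π ∈ Π_o(μ,ν)` : an optimal plan between `μ` and `ν`. -/
def IsOptPlan {d : ℕ} (π : Measure (Ed d × Ed d)) (μ ν : P2 d) : Prop :=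
  IsCoupling π μ ν ∧ ∀ π' : Measure (Ed d × Ed d), IsCoupling π' μ ν → Wcost π ≤ Wcost π'

/-- The closed Wasserstein ball `B_R(m̂)`. -/
def ballW {d : ℕ} (mhat : P2 d) (R : ℝ) : Set (P2 d) := {μ | W2 mhat μ ≤ R}

/-- The open Wasserstein ball `O_R(m̂)`. -/
def oballW {d : ℕ} (mhat : P2 d) (R : ℝ) : Set (P2 d) := {μ | W2 mhat μ < R}

/-- The Dirac measure at the origin as an element of `P₂(ℝ^d)`. -/
def dirac0 (d : ℕ) : P2 d :=
  ⟨Measure.dirac 0, ⟨by infer_instance, by rw [lintegral_dirac]; simp⟩⟩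

/-- The class `UC_m̂` : nonnegative, uniformly continuous on every bounded set,
positive-definite at `m̂`. -/
structure UCmem {d : ℕ} (mhat : P2 d) (φ : P2 d → ℝ) : Prop where
  nonneg : ∀ μ : P2 d, 0 ≤ φ μ
  unif_cont : ∀ R > (0 : ℝ), ∀ η > (0 : ℝ), ∃ δ > (0 : ℝ), ∀ μ ν : P2 d,
    W2 mhat μ ≤ R → W2 mhat ν ≤ R → W2 μ ν ≤ δ → |φ μ - φ ν| ≤ η
  zero_at : φ mhat = 0
  pos_off : ∀ μ : P2 d, μ ≠ mhat → 0 < φ μ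

/-- The inf-convolution `φ_κ`. -/
def infConv {d : ℕ} (φ : P2 d → ℝ) (κ : ℝ) (m : P2 d) : ℝ :=
  ⨅ μ : P2 d, (φ μ + 1 / (2 * κ ^ 2) * W2 m μ ^ 2)

/-- `S(R) = sup_{μ ∈ B_R(m̂)} φ(μ)`. -/
def Sfun {d : ℕ} (mhat : P2 d) (φ : P2 d → ℝ) (R : ℝ) : ℝ := sSup (φ '' ballW mhat R)

/-- `I(R) = inf_{μ ∉ O_R(m̂)} φ(μ)`. -/
def Ifun {d : ℕ} (mhat : P2 d) (φ : P2 d → ℝ) (R : ℝ) : ℝ := sInf (φ '' (oballW mhat R)ᶜ)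

/-- `G_R = {μ : φ(μ) ≤ I(R)/2}`. -/
def Gset {d : ℕ} (mhat : P2 d) (φ : P2 d → ℝ) (R : ℝ) : Set (P2 d) :=
  {μ | φ μ ≤ Ifun mhat φ R / 2}

/-- `G_R^κ = {μ : φ_κ(μ) ≤ I(R)/2}`. -/
def GsetK {d : ℕ} (mhat : P2 d) (φ : P2 d → ℝ) (κ R : ℝ) : Set (P2 d) :=
  {μ | infConv φ κ μ ≤ Ifun mhat φ R / 2}

/-- `𝓡(R) = sup{r ≥ 0 : B_r(m̂) ⊆ G_R}`. -/
def Rfun {d : ℕ} (mhat : P2 d) (φ : P2 d → ℝ) (R : ℝ) : ℝ :=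
  sSup {r : ℝ | 0 ≤ r ∧ ballW mhat r ⊆ Gset mhat φ R}

/-- `M_κ^ε(R) = κ√(2S(R)+ε²κ²) − εκ²`. -/
def Mke {d : ℕ} (mhat : P2 d) (φ : P2 d → ℝ) (κ ε R : ℝ) : ℝ :=
  κ * Real.sqrt (2 * Sfun mhat φ R + ε ^ 2 * κ ^ 2) - ε * κ ^ 2

/-- `M^ε(R) = R + √(2S(R)+ε²)`. -/
def Me {d : ℕ} (mhat : P2 d) (φ : P2 d → ℝ) (ε R : ℝ) : ℝ :=
  R + Real.sqrt (2 * Sfun mhat φ R + ε ^ 2)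

/-- `ω_R^ε(δ)`, the modulus of continuity of `φ` on `B_{M^ε(R)}(m̂)`. -/
def omegaR {d : ℕ} (mhat : P2 d) (φ : P2 d → ℝ) (ε R δ : ℝ) : ℝ :=
  sSup {c : ℝ | ∃ ν₁ ν₂ : P2 d, W2 ν₁ ν₂ ≤ δ ∧ W2 mhat ν₁ ≤ Me mhat φ ε R ∧
    W2 mhat ν₂ ≤ Me mhat φ ε R ∧ c = |φ ν₁ - φ ν₂|}

/-- `K_κ^ε(R) = εκ² + κ√(ε²κ² + 2ω_R^ε(M_κ^ε(R)))`. -/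
def Kke {d : ℕ} (mhat : P2 d) (φ : P2 d → ℝ) (κ ε R : ℝ) : ℝ :=
  ε * κ ^ 2 + κ * Real.sqrt (ε ^ 2 * κ ^ 2 + 2 * omegaR mhat φ ε R (Mke mhat φ κ ε R))

/-- `N_κ^ε(R,m) = εκ√(2φ_κ(m)) + ε·M_κ^ε(R)`. -/
def Nke {d : ℕ} (mhat : P2 d) (φ : P2 d → ℝ) (κ ε R : ℝ) (m : P2 d) : ℝ :=
  ε * κ * Real.sqrt (2 * infConv φ κ m) + ε * Mke mhat φ κ ε R

/-- `μ̄` is an Ekeland point for `(φ,κ,ε,m)`. -/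
def EkelandPt {d : ℕ} (φ : P2 d → ℝ) (κ ε : ℝ) (m μb : P2 d) : Prop :=
  (φ μb + 1 / (2 * κ ^ 2) * W2 m μb ^ 2 ≤ φ m - ε * W2 μb m) ∧
  ∀ μ : P2 d, φ μb + 1 / (2 * κ ^ 2) * W2 m μb ^ 2 ≤
    φ μ + 1 / (2 * κ ^ 2) * W2 m μ ^ 2 + ε * W2 μb μ

/-- The proximal subgradient inequality at `m` with target `μ`, slope measure `α`
and parameter `σ`. -/
def ProxIneq {d : ℕ} (φ : P2 d → ℝ) (ε σ : ℝ) (m : P2 d)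
    (α : Measure (Ed d × Ed d)) (μ : P2 d) : Prop :=
  ∀ β : Measure (Ed d × Ed d × Ed d), IsP2Meas β →
    IsCoupling (β.map fun z => (z.1, z.2.1)) m μ →
    β.map (fun z => (z.1, z.2.2)) = α →
    φ m + ∫ z, ⟪z.2.2, z.2.1 - z.1⟫_ℝ ∂β - σ * ∫ z, ‖z.2.1 - z.1‖ ^ 2 ∂β
      - ε * W2 m μ ≤ φ μ

/-- `α ∈ ∂_P^ε φ(m)` : proximal `ε`-subgradient. -/
def ProxSubgrad {d : ℕ} (φ : P2 d → ℝ) (ε : ℝ) (m : P2 d)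
    (α : Measure (Ed d × Ed d)) : Prop :=
  IsP2Meas α ∧ ∃ σ > (0 : ℝ), ∃ r > (0 : ℝ), ∀ μ : P2 d, W2 m μ ≤ r → ProxIneq φ ε σ m α μ

/-- `(φ,ψ)` is a control-Lyapunov pair at `m̂` for the dynamics `f`, with threshold `ε₀`. -/
structure IsCLP {d : ℕ} {U : Type*} (f : Ed d → P2 d → U → Ed d) (mhat : P2 d)
    (φ : P2 d → ℝ) (ψ : P2 d → ℝ → ℝ) (ε₀ : ℝ) : Prop where
  phi_uc : UCmem mhat φ
  psi_pos : ∀ (m : P2 d) (ε : ℝ), 0 < ε → 0 < ψ m ε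
  psi_cont : ∀ (m : P2 d) (ε : ℝ), 0 < ε → ∀ η > (0 : ℝ), ∃ δ > (0 : ℝ),
    ∀ (m' : P2 d) (ε' : ℝ), 0 < ε' → W2 m m' < δ → |ε - ε'| < δ → |ψ m ε - ψ m' ε'| < η
  level_bdd : ∀ c : ℝ, ∃ K : ℝ, ∀ μ : P2 d, φ μ ≤ c → W2 mhat μ ≤ K
  psi_inf_pos : ∀ r R : ℝ, 0 < r → r < R → ∀ ε > (0 : ℝ), ∃ g > (0 : ℝ),
    ∀ m : P2 d, W2 mhat m ≤ R → ¬ W2 mhat m < r → g ≤ ψ m ε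
  psi_mono : ∀ (m : P2 d) (ε ε' : ℝ), 0 < ε → ε ≤ ε' → ψ m ε ≤ ψ m ε'
  eps0_pos : 0 < ε₀
  decrease : ∀ ε : ℝ, 0 < ε → ε < ε₀ → ∀ (m : P2 d) (α : Measure (Ed d × Ed d)),
    ProxSubgrad φ ε m α → ∃ u : U, ∫ z, ⟪z.2, f z.1 m u⟫_ℝ ∂α ≤ -ψ m ε

/-- A partition of `[0,∞)`. -/
def IsPartition (θ : ℕ → ℝ) : Prop :=
  θ 0 = 0 ∧ StrictMono θ ∧ Tendsto θ atTop atTop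

/-- The steps of the partition `θ` lie in `[δ₁, δ₂]` (i.e. `θ ∈ Θ(δ₁,δ₂)`). -/
def StepIn (θ : ℕ → ℝ) (δ₁ δ₂ : ℝ) : Prop :=
  ∀ i : ℕ, δ₁ ≤ θ (i + 1) - θ i ∧ θ (i + 1) - θ i ≤ δ₂

/-- `W₂`-continuity of a measure-valued curve on `[a,b]`. -/
def W2ContinuousOn {d : ℕ} (m : ℝ → P2 d) (a b : ℝ) : Prop :=
  ∀ t ∈ Icc a b, ∀ η > (0 : ℝ), ∃ δ > (0 : ℝ), ∀ s ∈ Icc a b, |s - t| < δ →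
    W2 (m s) (m t) < η

/-- `m` is a `W₂`-continuous distributional solution of the non-local continuity equation
`∂_t m_t + div(f(x,m_t,u) m_t) = 0` on `[a,b]` with constant control `u`. -/
def SolvesCE {d : ℕ} {U : Type*} (f : Ed d → P2 d → U → Ed d) (u : U)
    (m : ℝ → P2 d) (a b : ℝ) : Prop :=
  W2ContinuousOn m a b ∧
  ∀ χ : Ed d × ℝ → ℝ, ContDiff ℝ (⊤ : ℕ∞) χ → HasCompactSupport χ →
    tsupport χ ⊆ univ ×ˢ Ioo a b →
    ∫ t in a..b, ∫ x, (deriv (fun s : ℝ => χ (x, s)) t +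
      fderiv ℝ (fun y : Ed d => χ (y, t)) x (f x (m t) u)) ∂(m t).1 = 0

/-- A `θ`-trajectory of the controlled continuity equation under the feedback `k`,
starting from `m_*`. -/
def IsTraj {d : ℕ} {U : Type*} (f : Ed d → P2 d → U → Ed d) (k : P2 d → U)
    (θ : ℕ → ℝ) (mstar : P2 d) (m : ℝ → P2 d) : Prop :=
  m 0 = mstar ∧ ∀ i : ℕ, SolvesCE f (k (m (θ i))) m (θ i) (θ (i + 1))

/-- The extremal-shift value `∫ ((x−y)/κ²)·f(x,m,u) dπ(x,y)`. -/
def shiftVal {d : ℕ} {U : Type*} (f : Ed d → P2 d → U → Ed d) (κ : ℝ)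
    (π : Measure (Ed d × Ed d)) (m : P2 d) (u : U) : ℝ :=
  ∫ p, ⟪(κ ^ 2)⁻¹ • (p.1 - p.2), f p.1 m u⟫_ℝ ∂π

/-- `k` is an extremal-shift feedback associated with the plan selection `πsel`. -/
def IsExtremalShift {d : ℕ} {U : Type*} (f : Ed d → P2 d → U → Ed d) (κ : ℝ)
    (πsel : P2 d → Measure (Ed d × Ed d)) (k : P2 d → U) : Prop :=
  ∀ (m : P2 d) (u : U), shiftVal f κ (πsel m) m (k m) ≤ shiftVal f κ (πsel m) m u

/-- `C₂(R)` (computed with time-step bound `δ` and `s = ς₂(m̂)`). -/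
def C2const (C₁ δ s R : ℝ) : ℝ :=
  C₁ * Real.exp (C₁ * δ) * (1 + 2 * (C₁ * δ + s + R) * Real.exp (2 * C₁ * δ))

/-- `C₃(R)` (computed with time-step bound `δ` and `s = ς₂(m̂)`). -/
def C3const (C₀ C₁ δ s R : ℝ) : ℝ :=
  C₀ * (C₁ * Real.exp (C₁ * δ) * (1 + 2 * (C₁ * δ + s + R) * Real.exp (2 * C₁ * δ))
    + C2const C₁ δ s R)

/-- A feedback `k` is s-stabilizing at `m̂`. -/
def SStabilizing {d : ℕ} {U : Type*} (f : Ed d → P2 d → U → Ed d) (mhat : P2 d)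
    (k : P2 d → U) : Prop :=
  ∃ M : ℝ → ℝ, (∀ R > (0 : ℝ), 0 < M R) ∧
    Tendsto M (nhdsWithin 0 (Ioi 0)) (nhds 0) ∧
    ∀ r R : ℝ, 0 < r → r < R → ∃ δ > (0 : ℝ), ∃ T > (0 : ℝ),
      ∀ δhat : ℝ, 0 < δhat → δhat < δ →
      ∀ θ : ℕ → ℝ, IsPartition θ → StepIn θ δhat δ →
      ∀ mstar : P2 d, W2 mhat mstar ≤ R →
      ∀ m : ℝ → P2 d, IsTraj f k θ mstar m →
        (∀ t : ℝ, T ≤ t → W2 mhat (m t) ≤ r) ∧ (∀ t : ℝ, 0 ≤ t → W2 mhat (m t) ≤ M R)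

/-!
The only analytic input is that along a weak solution of the continuity equation the measure moves
slowly in `W₂`. A `W₂`-continuous weak solution need not come with particles, so they are built:
with the curve frozen inside the velocity field, the superposition operator `X ↦ f(X, m_t, u)` is
Lipschitz on `L²`, and Picard–Lindelöf yields a Lagrangian flow started from the law `m_a`. Both
the laws of this flow and the curve `m` pass from `s` to `t` by the map
`x ↦ x + (t - s) f(x, m_s, u)` up to `o(t - s)` against test functions, and this consistency
determines the curve, so that the two coincide. Grönwall's inequality for the flow in `L²` then
bounds the displacement over one step of the partition by `C₂` times the length of the step.

A step starting in `G_{Q_{i-1}}^{κ_{i-1}} ⊆ B_{Q_{i-1}}` therefore stays in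
`O_{2Q_{i-1}} ⊆ O_{𝓡(Q_i)} ⊆ G_{Q_i} ⊆ G_{Q_i}^{κ_i}`, and a step starting in `H_{i-1}` is covered
by the one-step invariance of `k_i`; induction over the nodes of the partition concludes.
-/

section GlobalFlow

variable {E : Type*} [NormedAddCommGroup E] [NormedSpace ℝ E]
  {v : ℝ → E → E} {K : ℝ≥0} {a b : ℝ}

theorem exists_hasDerivWithinAt_Icc_of_Icc_of_Icc {c : ℝ} (hac : a ≤ c) (hcb : c ≤ b) {α β : ℝ → E}
    (hα : ∀ t ∈ Icc a c, HasDerivWithinAt α (v t (α t)) (Icc a c) t)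
    (hβ : ∀ t ∈ Icc c b, HasDerivWithinAt β (v t (β t)) (Icc c b) t) (hc : β c = α c) :
    ∃ γ : ℝ → E, γ a = α a ∧ ∀ t ∈ Icc a b, HasDerivWithinAt γ (v t (γ t)) (Icc a b) t := by
  let γ : ℝ → E := fun t => if t ≤ c then α t else β t
  have hγα : EqOn γ α (Icc a c) := fun t ht => if_pos ht.2
  have hγβ : EqOn γ β (Icc c b) := fun t ht => by
    rcases ht.1.eq_or_lt with rfl | h
    · exact (if_pos le_rfl).trans hc.symm
    · exact if_neg h.not_ge
  have hleft : ∀ t ∈ Icc a c, HasDerivWithinAt γ (v t (γ t)) (Icc a c) t := fun t ht => by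
    simpa only [hγα ht] using (hα t ht).congr hγα (hγα ht)
  have hright : ∀ t ∈ Icc c b, HasDerivWithinAt γ (v t (γ t)) (Icc c b) t := fun t ht => by
    simpa only [hγβ ht] using (hβ t ht).congr hγβ (hγβ ht)
  refine ⟨γ, if_pos hac, fun t ht => ?_⟩
  rcases lt_trichotomy t c with htc | rfl | htc
  · exact (hleft t ⟨ht.1, htc.le⟩).mono_of_mem_nhdsWithin
      (mem_nhdsWithin.2 ⟨Iio c, isOpen_Iio, htc, fun s hs => ⟨hs.2.1, hs.1.le⟩⟩)
  · rw [← Icc_union_Icc_eq_Icc hac hcb]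
    exact (hleft t ⟨ht.1, le_rfl⟩).union (hright t ⟨le_rfl, ht.2⟩)
  · exact (hright t ⟨htc.le, ht.2⟩).mono_of_mem_nhdsWithin
      (mem_nhdsWithin.2 ⟨Ioi c, isOpen_Ioi, htc, fun s hs => ⟨hs.1.le, hs.2.2⟩⟩)

variable [CompleteSpace E]

theorem exists_hasDerivWithinAt_of_lipschitzWith_of_mul_le (hab : a ≤ b)
    (hlip : ∀ t ∈ Icc a b, LipschitzWith K (v t))
    (hcont : ∀ x, ContinuousOn (fun t => v t x) (Icc a b)) (hK : K * (b - a) ≤ 1 / 2) (x : E) :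
    ∃ α : ℝ → E, α a = x ∧ ∀ t ∈ Icc a b, HasDerivWithinAt α (v t (α t)) (Icc a b) t := by
  obtain ⟨M, hM⟩ := isCompact_Icc.exists_bound_of_continuousOn (hcont x)
  have hba : 0 ≤ b - a := sub_nonneg.2 hab
  have hM0 : 0 ≤ M := (norm_nonneg _).trans (hM a (left_mem_Icc.2 hab))
  lift M to ℝ≥0 using hM0
  let ρ : ℝ≥0 := 2 * M * ⟨b - a, hba⟩
  have hpl : IsPicardLindelof v ⟨a, left_mem_Icc.2 hab⟩ x ρ 0 (M + K * ρ) K :=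
    { lipschitzOnWith := fun t ht => (hlip t ht).lipschitzOnWith
      continuousOn := fun y _ => hcont y
      norm_le := fun t ht y hy => by
        calc ‖v t y‖ ≤ ‖v t x‖ + ‖v t y - v t x‖ := norm_le_norm_add_norm_sub' _ _
          _ ≤ M + K * ‖y - x‖ := add_le_add (hM t ht) ((hlip t ht).norm_sub_le _ _)
          _ ≤ (M + K * ρ : ℝ≥0) := by
              push_cast
              gcongr
              exact mem_closedBall_iff_norm.1 hy
      mul_max_le := by
        have hρ : (ρ : ℝ) = 2 * M * (b - a) := rfl
        have hKρ : (M : ℝ) * (b - a) * (K * (b - a)) ≤ M * (b - a) * (1 / 2) := by gcongr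
        rw [sub_self, max_eq_left hba]
        push_cast
        rw [hρ]
        linarith }
  exact hpl.exists_eq_forall_mem_Icc_hasDerivWithinAt₀

theorem exists_hasDerivWithinAt_Icc_of_lipschitzWith (hab : a ≤ b)
    (hlip : ∀ t ∈ Icc a b, LipschitzWith K (v t))
    (hcont : ∀ x, ContinuousOn (fun t => v t x) (Icc a b)) (x : E) :
    ∃ α : ℝ → E, α a = x ∧ ∀ t ∈ Icc a b, HasDerivWithinAt α (v t (α t)) (Icc a b) t := by
  obtain ⟨n, hn⟩ : ∃ n : ℕ, K * (b - a) ≤ 2 ^ n / 2 := by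
    obtain ⟨n, hn⟩ := pow_unbounded_of_one_lt (2 * (K * (b - a))) (one_lt_two (α := ℝ))
    exact ⟨n, by linarith⟩
  induction n generalizing a b x with
  | zero =>
    exact exists_hasDerivWithinAt_of_lipschitzWith_of_mul_le hab hlip hcont (by simpa using hn) x
  | succ n ih =>
    rw [pow_succ] at hn
    obtain ⟨c, hc⟩ : ∃ c, c = (a + b) / 2 := ⟨_, rfl⟩
    have hac : a ≤ c := by linarith
    have hcb : c ≤ b := by linarith
    have hleft : K * (c - a) ≤ 2 ^ n / 2 := by linear_combination hn / 2 + K * hc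
    have hright : K * (b - c) ≤ 2 ^ n / 2 := by linear_combination hn / 2 - K * hc
    obtain ⟨α, rfl, hα⟩ := ih hac (fun t ht => hlip t ⟨ht.1, ht.2.trans hcb⟩)
      (fun y => (hcont y).mono (Icc_subset_Icc_right hcb)) x hleft
    obtain ⟨β, hβc, hβ⟩ := ih hcb (fun t ht => hlip t ⟨hac.trans ht.1, ht.2⟩)
      (fun y => (hcont y).mono (Icc_subset_Icc_left hac)) (α c) hright
    exact exists_hasDerivWithinAt_Icc_of_Icc_of_Icc hac hcb hα hβ hβc

end GlobalFlow

section Mollification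

open scoped Convolution ContDiff

variable {E F : Type*} [NormedAddCommGroup E] [NormedSpace ℝ E] [FiniteDimensional ℝ E]
  [MeasurableSpace E] [BorelSpace E] [NormedAddCommGroup F] [NormedSpace ℝ F]

theorem norm_convolution_sub_le {G H : Type*} [NormedAddCommGroup G] [NormedSpace ℝ G]
    [NormedAddCommGroup H] [NormedSpace ℝ H] (L : F →L[ℝ] G →L[ℝ] H) {f : E → F} {g : E → G}
    {μ : Measure E} [μ.IsAddHaarMeasure] {Λ : ℝ≥0}
    (hf : Continuous f) (hfs : HasCompactSupport f) (hg : LipschitzWith Λ g) (x y : E) :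
    ‖(f ⋆[L, μ] g) x - (f ⋆[L, μ] g) y‖ ≤ ‖L‖ * (∫ t, ‖f t‖ ∂μ) * (Λ * ‖x - y‖) := by
  have hint : ∀ z, ConvolutionExistsAt f g z L μ := fun z =>
    (hfs.convolutionExists_left L hf hg.continuous.locallyIntegrable) z
  calc ‖(f ⋆[L, μ] g) x - (f ⋆[L, μ] g) y‖
      = ‖∫ t, (L (f t) (g (x - t)) - L (f t) (g (y - t))) ∂μ‖ := by
        rw [integral_sub (hint x) (hint y)]; rfl
    _ ≤ ∫ t, ‖L‖ * ‖f t‖ * (Λ * ‖x - y‖) ∂μ := by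
        refine norm_integral_le_of_norm_le
          (((hf.norm.integrable_of_hasCompactSupport hfs.norm).const_mul _).mul_const _)
          (.of_forall fun t => ?_)
        rw [← map_sub]
        refine (L.le_opNorm₂ _ _).trans ?_
        gcongr
        simpa only [sub_sub_sub_cancel_right] using hg.norm_sub_le (x - t) (y - t)
    _ = ‖L‖ * (∫ t, ‖f t‖ ∂μ) * (Λ * ‖x - y‖) := by
        rw [integral_mul_const, integral_const_mul]

set_option maxSynthPendingDepth 3 in
theorem exists_contDiff_approx_lipschitzWith_fderiv [CompleteSpace F] (Λ : ℝ≥0) {ε : ℝ}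
    (hε : 0 < ε) :
    ∃ K : ℝ≥0, ∀ w : E → F, LipschitzWith Λ w → ∃ w' : E → F, ContDiff ℝ ∞ w' ∧
      (∀ x, ‖w' x - w x‖ ≤ ε) ∧ LipschitzWith Λ w' ∧ LipschitzWith K (fderiv ℝ w') := by
  have hr : 0 < ε / (Λ + 1) := by positivity
  let ρ : ContDiffBump (0 : E) := ⟨ε / (Λ + 1) / 2, ε / (Λ + 1), half_pos hr, half_lt_self hr⟩
  let f : E → ℝ := ρ.normed Measure.addHaar
  let L := ContinuousLinearMap.lsmul ℝ ℝ (E := F)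
  have hf : ContDiff ℝ ∞ f := ρ.contDiff_normed
  have hfs : HasCompactSupport f := ρ.hasCompactSupport_normed
  have hf_int : ∫ t, ‖f t‖ ∂Measure.addHaar = 1 := by
    simp only [f, Real.norm_of_nonneg (ρ.nonneg_normed _)]
    exact ρ.integral_normed
  refine ⟨(‖L.precompL E‖ * (∫ t, ‖fderiv ℝ f t‖ ∂Measure.addHaar) * Λ).toNNReal, fun w hw => ?_⟩
  have hwl : LocallyIntegrable w Measure.addHaar := hw.continuous.locallyIntegrable
  refine ⟨f ⋆[L, Measure.addHaar] w, hfs.contDiff_convolution_left _ hf hwl, fun x => ?_,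
    LipschitzWith.of_dist_le_mul fun x y => ?_, LipschitzWith.of_dist_le_mul fun x y => ?_⟩
  · rw [← dist_eq_norm]
    refine ContDiffBump.dist_normed_convolution_le hw.continuous.aestronglyMeasurable fun y hy => ?_
    calc dist (w y) (w x) ≤ Λ * dist y x := hw.dist_le_mul y x
      _ ≤ (Λ + 1) * (ε / (Λ + 1)) := by gcongr; exacts [by simp, (Metric.mem_ball.1 hy).le]
      _ = ε := by field_simp
  · rw [dist_eq_norm, dist_eq_norm]
    refine (norm_convolution_sub_le L hf.continuous hfs hw x y).trans ?_
    rw [hf_int, mul_one]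
    exact mul_le_of_le_one_left (by positivity) ContinuousLinearMap.opNorm_lsmul_le
  · have hderiv : ∀ z, fderiv ℝ (f ⋆[L, Measure.addHaar] w) z =
        (fderiv ℝ f ⋆[L.precompL E, Measure.addHaar] w) z := fun z =>
      (hfs.hasFDerivAt_convolution_left L (hf.of_le (by simp)) hwl z).fderiv
    rw [hderiv, hderiv, dist_eq_norm, dist_eq_norm, Real.coe_toNNReal _ (by positivity), mul_assoc]
    exact norm_convolution_sub_le _ (hf.continuous_fderiv (by simp)) (hfs.fderiv ℝ) hw x y

theorem measure_eq_of_forall_integral_contDiff_eq {μ ν : Measure E} [IsProbabilityMeasure μ]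
    [IsProbabilityMeasure ν] (h : ∀ ψ : E → ℝ, ContDiff ℝ ∞ ψ → HasCompactSupport ψ →
      ∫ x, ψ x ∂μ = ∫ x, ψ x ∂ν) : μ = ν := by
  refine Measure.ext_of_integral_eq_on_compactlySupported fun f =>
    eq_of_forall_dist_le fun ε hε => ?_
  have hf : Continuous f := map_continuous f
  obtain ⟨ψ, hψ, hψf, hψs⟩ := hf.exists_contDiff_approx ⊤ (ε := fun _ => ε / 2)
    continuous_const fun _ => half_pos hε
  have hψc : HasCompactSupport ψ := f.hasCompactSupport.mono hψs
  have happrox : ∀ (P : Measure E) [IsProbabilityMeasure P],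
      dist (∫ x, ψ x ∂P) (∫ x, f x ∂P) ≤ ε / 2 := fun P _ => by
    rw [dist_eq_norm, ← integral_sub (hψ.continuous.integrable_of_hasCompactSupport hψc)
      (hf.integrable_of_hasCompactSupport f.hasCompactSupport)]
    simpa using norm_integral_le_of_norm_le_const (μ := P)
      (.of_forall fun x => (dist_eq_norm (ψ x) (f x)).symm.trans_le (hψf x).le)
  calc dist (∫ x, f x ∂μ) (∫ x, f x ∂ν)
      ≤ dist (∫ x, ψ x ∂μ) (∫ x, f x ∂μ) + dist (∫ x, ψ x ∂μ) (∫ x, f x ∂ν) :=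
        dist_triangle_left _ _ _
    _ ≤ ε / 2 + ε / 2 := add_le_add (happrox μ) (h ψ hψ hψc ▸ happrox ν)
    _ = ε := add_halves ε

end Mollification

section TestFunctions

open scoped ContDiff

variable {E : Type*} [NormedAddCommGroup E] [NormedSpace ℝ E]

variable {w : E → E} {Λ K h : ℝ≥0}

theorem lipschitzWith_coe_smul (hw : LipschitzWith Λ w) :
    LipschitzWith (h * Λ) fun x => (h : ℝ) • w x :=
  LipschitzWith.of_dist_le_mul fun x y => by
    rw [dist_smul₀, NNReal.norm_eq, NNReal.coe_mul, mul_assoc]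
    exact mul_le_mul_of_nonneg_left (hw.dist_le_mul x y) h.2

theorem lipschitzWith_add_coe_smul (hw : LipschitzWith Λ w) :
    LipschitzWith (1 + h * Λ) fun x => x + (h : ℝ) • w x :=
  LipschitzWith.id.add (lipschitzWith_coe_smul hw)

/-- `ψ` is a test function of class `C_c^∞` with Lipschitz constants `A` for `ψ` and `M` for its
derivative. The normalisation `A ≤ M` makes the second constant after a change of variables
proportional to `M` alone, see `TestFn.comp_add_smul`. -/
structure TestFn (ψ : E → ℝ) (A M : ℝ≥0) : Prop where
  contDiff : ContDiff ℝ ∞ ψ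
  hasCompactSupport : HasCompactSupport ψ
  lipschitzWith : LipschitzWith A ψ
  lipschitzWith_fderiv : LipschitzWith M (fderiv ℝ ψ)
  le : A ≤ M

variable {ψ : E → ℝ} {A M : ℝ≥0}

theorem exists_testFn (hψ : ContDiff ℝ ∞ ψ) (hψs : HasCompactSupport ψ) : ∃ A M, TestFn ψ A M := by
  obtain ⟨A, hA⟩ := ContDiff.lipschitzWith_of_hasCompactSupport hψs hψ (by simp)
  obtain ⟨M, hM⟩ := ContDiff.lipschitzWith_of_hasCompactSupport (hψs.fderiv ℝ)
    (hψ.fderiv_right (m := ∞) (by simp)) (by simp)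
  exact ⟨A, max A M, hψ, hψs, hA, hM.weaken (le_max_right A M), le_max_left A M⟩

namespace TestFn

theorem continuous (h : TestFn ψ A M) : Continuous ψ := h.contDiff.continuous

theorem differentiable (h : TestFn ψ A M) : Differentiable ℝ ψ :=
  h.contDiff.differentiable (by simp)

theorem norm_fderiv_le (h : TestFn ψ A M) (x : E) : ‖fderiv ℝ ψ x‖ ≤ A :=
  norm_fderiv_le_of_lipschitz ℝ h.lipschitzWith

theorem continuous_fderiv_apply (h : TestFn ψ A M) (hw : Continuous w) :
    Continuous fun x => fderiv ℝ ψ x (w x) :=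
  (h.contDiff.continuous_fderiv (by simp)).clm_apply hw

theorem hasCompactSupport_fderiv_apply (h : TestFn ψ A M) (w : E → E) :
    HasCompactSupport fun x => fderiv ℝ ψ x (w x) :=
  h.hasCompactSupport.fderiv ℝ |>.mono' fun x hx =>
    subset_tsupport _ fun h0 => hx (by simp only [h0, zero_apply])

theorem integrable_comp (h : TestFn ψ A M) {α : Type*} [MeasurableSpace α] {P : Measure α}
    [IsFiniteMeasure P] {X : α → E} (hX : AEStronglyMeasurable X P) :
    Integrable (fun z => ψ (X z)) P := by
  obtain ⟨C, hC⟩ := h.continuous.bounded_above_of_compact_support h.hasCompactSupport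
  exact .of_bound (h.continuous.comp_aestronglyMeasurable hX) C (ae_of_all _ fun z => hC (X z))

theorem abs_sub_sub_fderiv_le (h : TestFn ψ A M) (x z : E) :
    |ψ (x + z) - ψ x - fderiv ℝ ψ x z| ≤ M * ‖z‖ ^ 2 := by
  have hball := (convex_closedBall x ‖z‖).norm_image_sub_le_of_norm_fderiv_le' (𝕜 := ℝ)
    (f := ψ) (φ := fderiv ℝ ψ x) (C := M * ‖z‖) (x := x) (y := x + z)
    (fun y _ => h.differentiable y) (fun y hy => ?_) (by simp) (by simp)
  · simpa only [add_sub_cancel_left, Real.norm_eq_abs, mul_assoc, ← sq] using hball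
  · refine (h.lipschitzWith_fderiv.norm_sub_le y x).trans ?_
    gcongr
    exact mem_closedBall_iff_norm.1 hy

theorem abs_fderiv_apply_sub_le (h : TestFn ψ A M) (hw : LipschitzWith Λ w)
    {G : ℝ} (hG : ∀ x, ‖w x‖ ≤ G * (1 + ‖x‖)) (x y : E) :
    |fderiv ℝ ψ x (w x) - fderiv ℝ ψ y (w y)| ≤ M * (G + Λ) * (‖x - y‖ * (1 + ‖x‖)) := by
  have hsplit : fderiv ℝ ψ x (w x) - fderiv ℝ ψ y (w y) =
      (fderiv ℝ ψ x - fderiv ℝ ψ y) (w x) + fderiv ℝ ψ y (w x - w y) := by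
    simp only [sub_apply, map_sub]; ring
  have hfst : |(fderiv ℝ ψ x - fderiv ℝ ψ y) (w x)| ≤ M * ‖x - y‖ * (G * (1 + ‖x‖)) :=
    (ContinuousLinearMap.le_opNorm _ _).trans
      (mul_le_mul (h.lipschitzWith_fderiv.norm_sub_le x y) (hG x) (norm_nonneg _) (by positivity))
  have hsnd : |fderiv ℝ ψ y (w x - w y)| ≤ M * (Λ * ‖x - y‖) * (1 + ‖x‖) :=
    calc |fderiv ℝ ψ y (w x - w y)| ≤ ‖fderiv ℝ ψ y‖ * ‖w x - w y‖ :=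
          (fderiv ℝ ψ y).le_opNorm _
      _ ≤ M * (Λ * ‖x - y‖) * 1 := by
          rw [mul_one]
          exact mul_le_mul ((h.norm_fderiv_le y).trans h.le) (hw.norm_sub_le x y)
            (norm_nonneg _) M.2
      _ ≤ M * (Λ * ‖x - y‖) * (1 + ‖x‖) := by
          gcongr
          exact le_add_of_nonneg_right (norm_nonneg x)
  rw [hsplit]
  linarith [abs_add_le ((fderiv ℝ ψ x - fderiv ℝ ψ y) (w x)) (fderiv ℝ ψ y (w x - w y))]

theorem fderiv_comp_add_smul (hψ : TestFn ψ A M) (hw : Differentiable ℝ w) (c : ℝ) (x : E) :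
    fderiv ℝ (fun x => ψ (x + c • w x)) x =
      (fderiv ℝ ψ (x + c • w x)).comp (ContinuousLinearMap.id ℝ E + c • fderiv ℝ w x) :=
  ((hψ.differentiable _).hasFDerivAt.comp x
    ((hasFDerivAt_id x).add ((hw x).hasFDerivAt.const_smul c))).fderiv

theorem lipschitzWith_fderiv_comp_add_smul (hψ : TestFn ψ A M) (hw : Differentiable ℝ w)
    (hΛ : LipschitzWith Λ w) (hK : LipschitzWith K (fderiv ℝ w)) :
    LipschitzWith (M * ((1 + h * Λ) ^ 2 + h * K)) (fderiv ℝ fun x => ψ (x + (h : ℝ) • w x)) := by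
  have hT : LipschitzWith (1 + h * Λ) fun x => x + (h : ℝ) • w x := lipschitzWith_add_coe_smul hΛ
  let J : E → E →L[ℝ] E := fun x => ContinuousLinearMap.id ℝ E + (h : ℝ) • fderiv ℝ w x
  have hJ : ∀ x, ‖J x‖ ≤ (1 + h * Λ : ℝ≥0) := fun x => by
    have hTx : HasFDerivAt (fun x => x + (h : ℝ) • w x) (J x) x :=
      (hasFDerivAt_id x).add ((hw x).hasFDerivAt.const_smul (h : ℝ))
    rw [← hTx.fderiv]
    exact norm_fderiv_le_of_lipschitz ℝ hT
  have hJ_sub : ∀ x y, ‖J x - J y‖ ≤ h * (K * ‖x - y‖) := fun x y => by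
    rw [add_sub_add_left_eq_sub, ← smul_sub, norm_smul, NNReal.norm_eq]
    exact mul_le_mul_of_nonneg_left (hK.norm_sub_le x y) h.2
  refine LipschitzWith.of_dist_le_mul fun x y => ?_
  rw [dist_eq_norm, dist_eq_norm, hψ.fderiv_comp_add_smul hw, hψ.fderiv_comp_add_smul hw]
  set Tx := x + (h : ℝ) • w x
  set Ty := y + (h : ℝ) • w y
  have hsplit : (fderiv ℝ ψ Tx).comp (J x) - (fderiv ℝ ψ Ty).comp (J y) =
      (fderiv ℝ ψ Tx - fderiv ℝ ψ Ty).comp (J x) + (fderiv ℝ ψ Ty).comp (J x - J y) := by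
    rw [ContinuousLinearMap.sub_comp, ContinuousLinearMap.comp_sub]; abel
  have hDψ : ‖fderiv ℝ ψ Tx - fderiv ℝ ψ Ty‖ ≤ M * ((1 + h * Λ : ℝ≥0) * ‖x - y‖) :=
    (hψ.lipschitzWith_fderiv.norm_sub_le _ _).trans
      (mul_le_mul_of_nonneg_left (hT.norm_sub_le x y) M.2)
  have hAM : (A : ℝ) ≤ M := hψ.le
  calc ‖(fderiv ℝ ψ Tx).comp (J x) - (fderiv ℝ ψ Ty).comp (J y)‖
      ≤ ‖fderiv ℝ ψ Tx - fderiv ℝ ψ Ty‖ * ‖J x‖ + ‖fderiv ℝ ψ Ty‖ * ‖J x - J y‖ := by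
        rw [hsplit]
        exact (norm_add_le _ _).trans (add_le_add (ContinuousLinearMap.opNorm_comp_le _ _)
          (ContinuousLinearMap.opNorm_comp_le _ _))
    _ ≤ M * ((1 + h * Λ : ℝ≥0) * ‖x - y‖) * (1 + h * Λ : ℝ≥0) + M * (h * (K * ‖x - y‖)) := by
        gcongr
        exacts [hJ x, (hψ.norm_fderiv_le _).trans hAM, hJ_sub x y]
    _ = (M * ((1 + h * Λ) ^ 2 + h * K) : ℝ≥0) * ‖x - y‖ := by push_cast; ring

theorem comp_add_smul [CompleteSpace E] (hψ : TestFn ψ A M) (hw : ContDiff ℝ ∞ w)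
    (hΛ : LipschitzWith Λ w) (hK : LipschitzWith K (fderiv ℝ w)) (hh : h * Λ < 1) :
    TestFn (fun x => ψ (x + (h : ℝ) • w x)) (A * (1 + h * Λ)) (M * ((1 + h * Λ) ^ 2 + h * K)) where
  contDiff := hψ.contDiff.comp (contDiff_id.add (hw.const_smul _))
  hasCompactSupport := by
    have hanti : AntilipschitzWith _ fun x => x + (h : ℝ) • w x :=
      AntilipschitzWith.id.add_lipschitzWith (lipschitzWith_coe_smul hΛ) (by simpa using hh)
    exact hψ.hasCompactSupport.comp_isClosedEmbedding
      (hanti.isClosedEmbedding (lipschitzWith_add_coe_smul hΛ).uniformContinuous)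
  lipschitzWith := hψ.lipschitzWith.comp (lipschitzWith_add_coe_smul hΛ)
  lipschitzWith_fderiv :=
    hψ.lipschitzWith_fderiv_comp_add_smul (hw.differentiable (by simp)) hΛ hK
  le := by
    refine mul_le_mul' hψ.le (le_add_right ?_)
    exact le_self_pow₀ (le_add_of_nonneg_right zero_le) two_ne_zero

end TestFn

end TestFunctions

section WassersteinDistance

open ProbabilityTheory

variable {d : ℕ} {Ω : Type*} [MeasurableSpace Ω] {P : Measure Ω} {μ ν : P2 d}

theorem lintegral_nnnorm_sq_eq_eLpNorm_sq {E : Type*} [NormedAddCommGroup E] (f : Ω → E) :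
    ∫⁻ ω, (‖f ω‖₊ : ℝ≥0∞) ^ 2 ∂P = eLpNorm f 2 P ^ 2 := by
  have h := eLpNorm_nnreal_pow_eq_lintegral (f := f) (μ := P) (p := 2) two_ne_zero
  simp only [NNReal.coe_ofNat, ENNReal.coe_ofNat, ENNReal.rpow_ofNat] at h
  exact h.symm

theorem IsP2Meas.memLp_id {E : Type*} [NormedAddCommGroup E] [MeasurableSpace E]
    [OpensMeasurableSpace E] [SecondCountableTopology E] {μ : Measure E} (hμ : IsP2Meas μ) :
    MemLp id 2 μ := by
  refine ⟨aestronglyMeasurable_id, ?_⟩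
  have h := hμ.2
  rwa [lintegral_nnnorm_sq_eq_eLpNorm_sq, ENNReal.pow_lt_top_iff, or_iff_left two_ne_zero] at h

theorem varsigma2_eq_norm {X : Lp (Ed d) 2 P} (hX : HasLaw X μ.1 P) : varsigma2 μ = ‖X‖ := by
  rw [varsigma2, ← hX.lintegral_comp (by fun_prop), lintegral_nnnorm_sq_eq_eLpNorm_sq,
    ENNReal.toReal_pow, Real.sqrt_sq ENNReal.toReal_nonneg, Lp.norm_def]

/-- The identity map, as the canonical random variable with law `μ` in `L²(μ)`. -/
def P2.idLp (μ : P2 d) : Lp (Ed d) 2 μ.1 := μ.2.memLp_id.toLp id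

theorem P2.coeFn_idLp (μ : P2 d) : μ.idLp =ᵐ[μ.1] id := μ.2.memLp_id.coeFn_toLp

theorem P2.hasLaw_idLp (μ : P2 d) : HasLaw μ.idLp μ.1 μ.1 := HasLaw.id.congr μ.coeFn_idLp

theorem wcost_eq_eLpNorm_sq (π : Measure (Ed d × Ed d)) :
    Wcost π = eLpNorm (fun p => p.1 - p.2) 2 π ^ 2 :=
  lintegral_nnnorm_sq_eq_eLpNorm_sq fun p : Ed d × Ed d => p.1 - p.2

namespace IsCoupling

variable {π : Measure (Ed d × Ed d)}

theorem prod (μ ν : P2 d) : IsCoupling (μ.1.prod ν.1) μ ν := by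
  have := μ.2.1
  have := ν.2.1
  constructor
  · rw [Measure.map_fst_prod, measure_univ, one_smul]
  · rw [Measure.map_snd_prod, measure_univ, one_smul]

theorem isProbabilityMeasure (hπ : IsCoupling π μ ν) : IsProbabilityMeasure π := by
  have := μ.2.1
  exact ⟨by rw [← Measure.fst_univ, Measure.fst, hπ.1, measure_univ]⟩

theorem hasLaw_fst (hπ : IsCoupling π μ ν) : HasLaw Prod.fst μ.1 π := ⟨by fun_prop, hπ.1⟩

theorem hasLaw_snd (hπ : IsCoupling π μ ν) : HasLaw Prod.snd ν.1 π := ⟨by fun_prop, hπ.2⟩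

theorem memLp_fst (hπ : IsCoupling π μ ν) : MemLp Prod.fst 2 π :=
  μ.2.memLp_id.comp_measurePreserving (hπ.hasLaw_fst.measurePreserving measurable_fst)

theorem memLp_snd (hπ : IsCoupling π μ ν) : MemLp Prod.snd 2 π :=
  ν.2.memLp_id.comp_measurePreserving (hπ.hasLaw_snd.measurePreserving measurable_snd)

theorem wcost_ne_top (hπ : IsCoupling π μ ν) : Wcost π ≠ ⊤ :=
  wcost_eq_eLpNorm_sq π ▸ ENNReal.pow_ne_top (hπ.memLp_fst.sub hπ.memLp_snd).eLpNorm_ne_top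

theorem W2_le (hπ : IsCoupling π μ ν) : W2 μ ν ≤ (eLpNorm (fun p => p.1 - p.2) 2 π).toReal := by
  refine Real.sqrt_le_iff.2 ⟨ENNReal.toReal_nonneg, ?_⟩
  rw [← ENNReal.toReal_pow, ← wcost_eq_eLpNorm_sq]
  exact ENNReal.toReal_mono hπ.wcost_ne_top (biInf_le Wcost hπ)

end IsCoupling

theorem exists_isCoupling_of_W2_lt {η : ℝ} (h : W2 μ ν < η) :
    ∃ π, IsCoupling π μ ν ∧ eLpNorm (fun p => p.1 - p.2) 2 π < ENNReal.ofReal η := by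
  have hη : 0 < η := (Real.sqrt_nonneg _).trans_lt h
  have hfin : ⨅ π ∈ {π : Measure (Ed d × Ed d) | IsCoupling π μ ν}, Wcost π ≠ ⊤ :=
    ne_top_of_le_ne_top (IsCoupling.prod μ ν).wcost_ne_top (biInf_le Wcost (IsCoupling.prod μ ν))
  rw [W2, Real.sqrt_lt' hη, ← ENNReal.lt_ofReal_iff_toReal_lt hfin, ENNReal.ofReal_pow hη.le] at h
  obtain ⟨π, hπ, hcost⟩ : ∃ π, IsCoupling π μ ν ∧ Wcost π < ENNReal.ofReal η ^ 2 := by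
    simpa only [iInf_lt_iff, mem_ofPred_eq, exists_prop] using h
  exact ⟨π, hπ, lt_of_pow_lt_pow_left' 2 (wcost_eq_eLpNorm_sq π ▸ hcost)⟩

theorem exists_lp_norm_sub_lt_of_W2_lt {η : ℝ} (h : W2 μ ν < η) :
    ∃ (π : Measure (Ed d × Ed d)) (X Y : Lp (Ed d) 2 π),
      HasLaw X μ.1 π ∧ HasLaw Y ν.1 π ∧ ‖X - Y‖ < η := by
  obtain ⟨π, hπ, hcost⟩ := exists_isCoupling_of_W2_lt h
  refine ⟨π, hπ.memLp_fst.toLp, hπ.memLp_snd.toLp, hπ.hasLaw_fst.congr hπ.memLp_fst.coeFn_toLp,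
    hπ.hasLaw_snd.congr hπ.memLp_snd.coeFn_toLp, ?_⟩
  rw [← MemLp.toLp_sub, Lp.norm_toLp]
  exact (ENNReal.lt_ofReal_iff_toReal_lt hcost.ne_top).1 hcost

theorem W2_le_norm_sub {X Y : Lp (Ed d) 2 P} (hX : HasLaw X μ.1 P) (hY : HasLaw Y ν.1 P) :
    W2 μ ν ≤ ‖X - Y‖ := by
  have hXY : AEMeasurable (fun ω => (X ω, Y ω)) P := hX.aemeasurable.prodMk hY.aemeasurable
  have hcoup : IsCoupling (P.map fun ω => (X ω, Y ω)) μ ν := by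
    constructor
    · rw [AEMeasurable.map_map_of_aemeasurable (by fun_prop) hXY]; exact hX.map_eq
    · rw [AEMeasurable.map_map_of_aemeasurable (by fun_prop) hXY]; exact hY.map_eq
  refine hcoup.W2_le.trans_eq ?_
  rw [eLpNorm_map_measure (by fun_prop) hXY, Lp.norm_def, eLpNorm_congr_ae (Lp.coeFn_sub X Y)]
  rfl

theorem exists_measure_map_eq_and_map_eq {α β γ : Type*} [MeasurableSpace α] [MeasurableSpace β]
    [StandardBorelSpace β] [Nonempty β] [MeasurableSpace γ] [StandardBorelSpace γ] [Nonempty γ]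
    (π : Measure (α × β)) (ρ : Measure (α × γ)) [IsFiniteMeasure π] [IsFiniteMeasure ρ]
    (h : π.fst = ρ.fst) :
    ∃ τ : Measure (α × β × γ),
      τ.map (fun z => (z.1, z.2.1)) = π ∧ τ.map (fun z => (z.1, z.2.2)) = ρ := by
  refine ⟨π.fst ⊗ₘ (π.condKernel ×ₖ ρ.condKernel), ?_, ?_⟩
  · have hmap := Measure.compProd_map (μ := π.fst) (κ := π.condKernel ×ₖ ρ.condKernel)
      (f := Prod.fst) measurable_fst
    rw [← Kernel.fst_eq, Kernel.fst_prod, π.disintegrate] at hmap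
    exact hmap.symm
  · have hmap := Measure.compProd_map (μ := π.fst) (κ := π.condKernel ×ₖ ρ.condKernel)
      (f := Prod.snd) measurable_snd
    rw [← Kernel.snd_eq, Kernel.snd_prod, h, ρ.disintegrate] at hmap
    rw [h]
    exact hmap.symm

theorem W2_nonneg (μ ν : P2 d) : 0 ≤ W2 μ ν := Real.sqrt_nonneg _

theorem varsigma2_nonneg (μ : P2 d) : 0 ≤ varsigma2 μ := Real.sqrt_nonneg _

theorem W2_self (μ : P2 d) : W2 μ μ = 0 :=
  le_antisymm ((W2_le_norm_sub μ.hasLaw_idLp μ.hasLaw_idLp).trans_eq (by rw [sub_self, norm_zero]))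
    (W2_nonneg μ μ)

theorem W2_comm (μ ν : P2 d) : W2 μ ν = W2 ν μ := by
  have hle : ∀ μ ν : P2 d, W2 μ ν ≤ W2 ν μ := fun μ ν => le_of_forall_gt_imp_ge_of_dense
    fun η hη => by
      obtain ⟨π, X, Y, hX, hY, hXY⟩ := exists_lp_norm_sub_lt_of_W2_lt hη
      exact (W2_le_norm_sub hY hX).trans (norm_sub_rev X Y ▸ hXY.le)
  exact le_antisymm (hle μ ν) (hle ν μ)

theorem W2_le_add_of_lt {ρ : P2 d} {η₁ η₂ : ℝ} (h₁ : W2 ν μ < η₁) (h₂ : W2 ν ρ < η₂) :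
    W2 μ ρ ≤ η₁ + η₂ := by
  obtain ⟨π₁, hπ₁, hcost₁⟩ := exists_isCoupling_of_W2_lt h₁
  obtain ⟨π₂, hπ₂, hcost₂⟩ := exists_isCoupling_of_W2_lt h₂
  have := hπ₁.isProbabilityMeasure
  have := hπ₂.isProbabilityMeasure
  obtain ⟨τ, hτ₁, hτ₂⟩ := exists_measure_map_eq_and_map_eq π₁ π₂ (hπ₁.1.trans hπ₂.1.symm)
  have hcoup : IsCoupling (τ.map Prod.snd) μ ρ := by
    constructor
    · rw [← hπ₁.2, ← hτ₁, Measure.map_map (by fun_prop) (by fun_prop),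
        Measure.map_map (by fun_prop) (by fun_prop)]
      rfl
    · rw [← hπ₂.2, ← hτ₂, Measure.map_map (by fun_prop) (by fun_prop),
        Measure.map_map (by fun_prop) (by fun_prop)]
      rfl
  rw [← hτ₁, eLpNorm_map_measure (by fun_prop) (by fun_prop)] at hcost₁
  rw [← hτ₂, eLpNorm_map_measure (by fun_prop) (by fun_prop)] at hcost₂
  have htri : eLpNorm (fun p => p.1 - p.2) 2 (τ.map Prod.snd) ≤
      ENNReal.ofReal η₁ + ENNReal.ofReal η₂ := by
    have hsub : (fun p : Ed d × Ed d => p.1 - p.2) ∘ Prod.snd =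
        (fun z : Ed d × Ed d × Ed d => z.1 - z.2.2) - fun z => z.1 - z.2.1 := by
      ext1 z
      simp only [Function.comp_apply, Pi.sub_apply, sub_sub_sub_cancel_left]
    rw [eLpNorm_map_measure (by fun_prop) (by fun_prop), hsub, add_comm]
    exact (eLpNorm_sub_le (by fun_prop) (by fun_prop) one_le_two).trans
      (add_le_add hcost₂.le hcost₁.le)
  have hη₁ := (W2_nonneg ν μ).trans h₁.le
  have hη₂ := (W2_nonneg ν ρ).trans h₂.le
  rw [← ENNReal.ofReal_add hη₁ hη₂] at htri
  exact hcoup.W2_le.trans (ENNReal.toReal_le_of_le_ofReal (add_nonneg hη₁ hη₂) htri)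

theorem W2_triangle (μ ν ρ : P2 d) : W2 μ ρ ≤ W2 μ ν + W2 ν ρ := by
  refine le_of_forall_pos_le_add fun ε hε => ?_
  have h := W2_le_add_of_lt (lt_add_of_pos_right (W2 ν μ) (half_pos hε))
    (lt_add_of_pos_right (W2 ν ρ) (half_pos hε))
  rw [W2_comm ν μ] at h
  linarith

/-- `W₂` as a pseudometric on `P₂(ℝ^d)`, which is all that the Lipschitz and continuity notions of
the library require. -/
instance : PseudoMetricSpace (P2 d) where
  dist := W2
  dist_self := W2_self
  dist_comm := W2_comm
  dist_triangle := W2_triangle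

theorem lipschitzWith_varsigma2 : LipschitzWith 1 (varsigma2 : P2 d → ℝ) :=
  LipschitzWith.of_le_add fun μ ν => by
    rw [← sub_le_iff_le_add']
    refine le_of_forall_gt_imp_ge_of_dense fun η hη => ?_
    obtain ⟨π, X, Y, hX, hY, hXY⟩ := exists_lp_norm_sub_lt_of_W2_lt hη
    rw [varsigma2_eq_norm hX, varsigma2_eq_norm hY]
    linarith [norm_le_norm_add_norm_sub' X Y]

theorem continuousOn_Icc_of_W2ContinuousOn {m : ℝ → P2 d} {a b : ℝ} (hm : W2ContinuousOn m a b) :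
    ContinuousOn m (Icc a b) :=
  Metric.continuousOn_iff.2 hm

end WassersteinDistance

section MeanSquareEstimates

open ProbabilityTheory

variable {Ω E : Type*} [MeasurableSpace Ω] {P : Measure Ω} [NormedAddCommGroup E]

theorem integral_mul_le_norm_toLp_mul_norm_toLp {F G : Ω → ℝ} (hF : MemLp F 2 P)
    (hG : MemLp G 2 P) : ∫ ω, F ω * G ω ∂P ≤ ‖hF.toLp‖ * ‖hG.toLp‖ := by
  have hinner : ∫ ω, F ω * G ω ∂P = ⟪hG.toLp, hF.toLp⟫_ℝ := by
    rw [L2.inner_def]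
    refine integral_congr_ae ?_
    filter_upwards [hF.coeFn_toLp, hG.coeFn_toLp] with ω hFω hGω
    rw [hFω, hGω, RCLike.inner_apply, conj_trivial]
  rw [hinner, mul_comm]
  exact real_inner_le_norm _ _

variable [IsProbabilityMeasure P]

theorem memLp_const_add_norm (c : ℝ) (X : Lp E 2 P) : MemLp (fun ω => c + ‖X ω‖) 2 P :=
  (memLp_const c).add (Lp.memLp X).norm

theorem norm_toLp_const_add_norm_le {c : ℝ} (hc : 0 ≤ c) (X : Lp E 2 P) :
    ‖(memLp_const_add_norm c X).toLp‖ ≤ c + ‖X‖ := by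
  have hconst : ‖(memLp_const (μ := P) (p := 2) c).toLp‖ = c := by
    rw [Lp.norm_toLp, eLpNorm_const _ two_ne_zero (NeZero.ne P), measure_univ, ENNReal.one_rpow,
      mul_one, toReal_enorm, Real.norm_of_nonneg hc]
  have hX : ‖(Lp.memLp X).norm.toLp‖ = ‖X‖ := by
    rw [Lp.norm_toLp, eLpNorm_norm, Lp.norm_def]
  exact (norm_add_le (MemLp.toLp _ _) (MemLp.toLp _ _)).trans_eq (by rw [hconst, hX])

theorem integral_norm_mul_one_add_norm_le (Z X : Lp E 2 P) :
    ∫ ω, ‖Z ω‖ * (1 + ‖X ω‖) ∂P ≤ ‖Z‖ * (1 + ‖X‖) := by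
  have hZ : ‖(Lp.memLp Z).norm.toLp‖ = ‖Z‖ := by
    rw [Lp.norm_toLp, eLpNorm_norm, Lp.norm_def]
  exact (integral_mul_le_norm_toLp_mul_norm_toLp (Lp.memLp Z).norm (memLp_const_add_norm 1 X)).trans
    (hZ ▸ mul_le_mul_of_nonneg_left (norm_toLp_const_add_norm_le zero_le_one X) (norm_nonneg _))

theorem integral_one_add_norm_sq_le (X : Lp E 2 P) :
    ∫ ω, (1 + ‖X ω‖) ^ 2 ∂P ≤ (1 + ‖X‖) ^ 2 := by
  simp only [sq]
  have hle := norm_toLp_const_add_norm_le zero_le_one X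
  exact (integral_mul_le_norm_toLp_mul_norm_toLp (memLp_const_add_norm 1 X)
    (memLp_const_add_norm 1 X)).trans (mul_self_le_mul_self (norm_nonneg _) hle)

theorem integral_norm_le_norm (Z : Lp E 2 P) : ∫ ω, ‖Z ω‖ ∂P ≤ ‖Z‖ := by
  have h := integral_norm_mul_one_add_norm_le Z 0
  rw [norm_zero, add_zero, mul_one] at h
  refine (integral_congr_ae ?_).trans_le h
  filter_upwards [Lp.coeFn_zero E 2 P] with ω hω
  rw [hω, Pi.zero_apply, norm_zero, add_zero, mul_one]

variable {d : ℕ} {μ ν : P2 d}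

theorem abs_integral_sub_integral_le_W2 {g : Ed d → ℝ} {L : ℝ} (hL : 0 ≤ L)
    (hμ : Integrable g μ.1) (hν : Integrable g ν.1)
    (hg : ∀ x y, |g x - g y| ≤ L * (‖x - y‖ * (1 + ‖x‖))) :
    |∫ x, g x ∂μ.1 - ∫ x, g x ∂ν.1| ≤ L * (1 + varsigma2 μ) * W2 μ ν := by
  have hbound : ∀ η, W2 μ ν < η →
      |∫ x, g x ∂μ.1 - ∫ x, g x ∂ν.1| ≤ L * (1 + varsigma2 μ) * η := fun η hη => by
    obtain ⟨π, X, Y, hX, hY, hXY⟩ := exists_lp_norm_sub_lt_of_W2_lt hη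
    have := μ.2.1
    have := hX.isProbabilityMeasure
    have hgX : Integrable (g ∘ X) π := .comp_aemeasurable (hX.map_eq ▸ hμ) hX.aemeasurable
    have hgY : Integrable (g ∘ Y) π := .comp_aemeasurable (hY.map_eq ▸ hν) hY.aemeasurable
    rw [← hX.integral_comp hμ.1, ← hY.integral_comp hν.1, ← integral_sub hgX hgY,
      ← Real.norm_eq_abs, varsigma2_eq_norm hX]
    calc ‖∫ ω, (g ∘ X) ω - (g ∘ Y) ω ∂π‖
        ≤ ∫ ω, L * (‖(X - Y) ω‖ * (1 + ‖X ω‖)) ∂π := by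
          refine norm_integral_le_of_norm_le
            (((Lp.memLp (X - Y)).norm.integrable_mul (memLp_const_add_norm 1 X)).const_mul L) ?_
          filter_upwards [Lp.coeFn_sub X Y] with ω hω
          rw [hω]
          exact hg _ _
      _ ≤ L * (‖X - Y‖ * (1 + ‖X‖)) := by
          rw [integral_const_mul]
          exact mul_le_mul_of_nonneg_left (integral_norm_mul_one_add_norm_le _ _) hL
      _ ≤ L * (1 + ‖X‖) * η := by
          rw [mul_comm ‖X - Y‖, ← mul_assoc]
          gcongr
  exact ge_of_tendsto (x := 𝓝[>] W2 μ ν) (((continuous_const_mul _).tendsto _).mono_left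
    nhdsWithin_le_nhds) (eventually_mem_nhdsWithin.mono hbound)

end MeanSquareEstimates

section EulerScheme

open scoped ContDiff

variable {E : Type*} [NormedAddCommGroup E] [NormedSpace ℝ E] [MeasurableSpace E]

/-- Over time steps shorter than `δ`, the Euler scheme `x ↦ x + h • v s x` transports `μ s` to
`μ (s + h)` up to an error `h * η`, measured against test functions and relative to the Lipschitz
constant `M` of their derivatives. -/
def EulerErrorLE (v : ℝ → E → E) (μ : ℝ → Measure E) (a b η δ : ℝ) : Prop :=
  ∀ ⦃s : ℝ⦄ ⦃h : ℝ≥0⦄, a ≤ s → s + h ≤ b → (h : ℝ) < δ →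
    ∀ ⦃ψ : E → ℝ⦄ ⦃A M : ℝ≥0⦄, TestFn ψ A M →
      |∫ x, ψ x ∂μ (s + h) - ∫ x, ψ (x + (h : ℝ) • v s x) ∂μ s| ≤ h * (η * M)

/-- The curve of measures `μ` is consistent with the Euler scheme of the velocity field `v`: this
is the form in which the continuity equation enters the uniqueness proof. -/
def EulerConsistent (v : ℝ → E → E) (μ : ℝ → Measure E) (a b : ℝ) : Prop :=
  ∀ η > 0, ∃ δ > 0, EulerErrorLE v μ a b η δ

variable {v : ℝ → E → E} {μ ν : ℝ → Measure E} {a b : ℝ} {Λ : ℝ≥0}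

theorem EulerErrorLE.mono {η δ δ' : ℝ} (hμ : EulerErrorLE v μ a b η δ) (hδ : δ' ≤ δ) :
    EulerErrorLE v μ a b η δ' :=
  fun _ _ has hsb hh _ _ _ hψ => hμ has hsb (hh.trans_le hδ) hψ

variable [BorelSpace E]

theorem TestFn.abs_integral_comp_add_smul_sub_le [SecondCountableTopology E] {ψ : E → ℝ}
    {A M h : ℝ≥0} (hψ : TestFn ψ A M) {μ : Measure E} [IsProbabilityMeasure μ] {w w' : E → E}
    (hw : Continuous w) (hw' : Continuous w') {ε : ℝ} (hww' : ∀ x, ‖w' x - w x‖ ≤ ε) :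
    |∫ x, ψ (x + (h : ℝ) • w' x) ∂μ - ∫ x, ψ (x + (h : ℝ) • w x) ∂μ| ≤ h * (A * ε) := by
  have hint : ∀ {u : E → E}, Continuous u → Integrable (fun x => ψ (x + (h : ℝ) • u x)) μ :=
    fun hu => hψ.integrable_comp (by fun_prop)
  have hpt : ∀ x, ‖ψ (x + (h : ℝ) • w' x) - ψ (x + (h : ℝ) • w x)‖ ≤ h * (A * ε) := fun x => by
    refine (hψ.lipschitzWith.norm_sub_le _ _).trans ?_
    rw [add_sub_add_left_eq_sub, ← smul_sub, norm_smul, NNReal.norm_eq, mul_left_comm]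
    gcongr
    exact hww' x
  rw [← integral_sub (hint hw') (hint hw)]
  simpa only [Real.norm_eq_abs, probReal_univ, mul_one] using
    norm_integral_le_of_norm_le_const (ae_of_all μ hpt)

theorem EulerErrorLE.abs_integral_sub_le_of_step [SecondCountableTopology E]
    [∀ t, IsProbabilityMeasure (μ t)] [∀ t, IsProbabilityMeasure (ν t)] {η δ ε s : ℝ}
    {h A M : ℝ≥0} {ψ : E → ℝ} {w : E → E} (hμ : EulerErrorLE v μ a b η δ)
    (hν : EulerErrorLE v ν a b η δ) (has : a ≤ s) (hsb : s + h ≤ b) (hh : (h : ℝ) < δ)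
    (hψ : TestFn ψ A M) (hv : Continuous (v s)) (hw : Continuous w)
    (hwv : ∀ x, ‖w x - v s x‖ ≤ ε) :
    |∫ x, ψ x ∂μ (s + h) - ∫ x, ψ x ∂ν (s + h)| ≤
      |∫ x, ψ (x + (h : ℝ) • w x) ∂μ s - ∫ x, ψ (x + (h : ℝ) • w x) ∂ν s|
        + 2 * h * (η * M + A * ε) := by
  have h₁ := abs_le.1 (hμ has hsb hh hψ)
  have h₂ := abs_le.1 (hν has hsb hh hψ)
  have h₃ := abs_le.1 (hψ.abs_integral_comp_add_smul_sub_le (μ := μ s) (h := h) hv hw hwv)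
  have h₄ := abs_le.1 (hψ.abs_integral_comp_add_smul_sub_le (μ := ν s) (h := h) hv hw hwv)
  have h₅ := abs_le.1 (le_refl |∫ x, ψ (x + (h : ℝ) • w x) ∂μ s - ∫ x, ψ (x + (h : ℝ) • w x) ∂ν s|)
  exact abs_le.2 ⟨by linarith, by linarith⟩

theorem EulerErrorLE.abs_integral_sub_le_of_mesh [CompleteSpace E] [SecondCountableTopology E]
    [∀ t, IsProbabilityMeasure (μ t)] [∀ t, IsProbabilityMeasure (ν t)] {η δ ε : ℝ} {h K : ℝ≥0}
    (hμ : EulerErrorLE v μ a b η δ) (hν : EulerErrorLE v ν a b η δ) (hμν : μ a = ν a)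
    (hv : ∀ t, LipschitzWith Λ (v t)) (hη : 0 ≤ η) (hε : 0 ≤ ε) (hh : (h : ℝ) < δ)
    (hhΛ : h * Λ < 1)
    (hK : ∀ t, ∃ w : E → E, ContDiff ℝ ∞ w ∧ (∀ x, ‖w x - v t x‖ ≤ ε) ∧ LipschitzWith Λ w ∧
      LipschitzWith K (fderiv ℝ w)) (n : ℕ) (hn : a + n * h ≤ b) ⦃ψ : E → ℝ⦄ ⦃A M : ℝ≥0⦄
    (hψ : TestFn ψ A M) :
    |∫ x, ψ x ∂μ (a + n * h) - ∫ x, ψ x ∂ν (a + n * h)| ≤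
      2 * (n * h) * (η * M * ((1 + h * Λ) ^ 2 + h * K) ^ n + A * ε * (1 + h * Λ) ^ n) := by
  induction n generalizing ψ A M with
  | zero => simp [hμν]
  | succ n ih =>
    have hnext : a + (n + 1 : ℕ) * (h : ℝ) = a + n * h + h := by push_cast; ring
    obtain ⟨w, hw, hwv, hwΛ, hwK⟩ := hK (a + n * h)
    rw [hnext] at hn ⊢
    have hrec := ih (le_of_add_le_of_nonneg_left hn h.2) (hψ.comp_add_smul hw hwΛ hwK hhΛ)
    have hstep := hμ.abs_integral_sub_le_of_step hν (le_add_of_nonneg_right (by positivity))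
      hn hh hψ (hv _).continuous hw.continuous hwv
    have hl : (1 : ℝ) ≤ 1 + h * Λ := le_add_of_nonneg_right (by positivity)
    have hq : (1 : ℝ) ≤ (1 + h * Λ) ^ 2 + h * K :=
      (one_le_pow₀ hl).trans (le_add_of_nonneg_right (by positivity))
    have hlast : 2 * h * (η * M + A * ε) ≤ 2 * h * (η * M * ((1 + h * Λ) ^ 2 + h * K) ^ (n + 1)
        + A * ε * (1 + h * Λ) ^ (n + 1)) :=
      mul_le_mul_of_nonneg_left (add_le_add
        (le_mul_of_one_le_right (by positivity) (one_le_pow₀ hq))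
        (le_mul_of_one_le_right (by positivity) (one_le_pow₀ hl))) (by positivity)
    push_cast at hrec
    refine (hstep.trans (add_le_add hrec hlast)).trans_eq ?_
    push_cast
    ring

theorem one_add_mul_pow_le_exp {h c T : ℝ} (hh : 0 ≤ h) (hc : 0 ≤ c) {n : ℕ} (hn : n * h = T) :
    (1 + h * c) ^ n ≤ Real.exp (c * T) := by
  rw [← hn, show c * (n * h) = n * (h * c) by ring, Real.exp_nat_mul]
  gcongr
  linarith [Real.add_one_le_exp (h * c)]

theorem sq_one_add_mul_add_mul_pow_le_exp {h c k T : ℝ} (hh : 0 ≤ h) (hc : 0 ≤ c) (hk : 0 ≤ k)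
    {n : ℕ} (hn : n * h = T) : ((1 + h * c) ^ 2 + h * k) ^ n ≤ Real.exp ((2 * c + k) * T) := by
  have hbase : (1 + h * c) ^ 2 + h * k ≤ (1 + h * c) ^ 2 * (1 + h * k) := by
    have : 1 ≤ (1 + h * c) ^ 2 := one_le_pow₀ (by nlinarith [mul_nonneg hh hc])
    nlinarith [mul_nonneg hh hk]
  calc ((1 + h * c) ^ 2 + h * k) ^ n ≤ ((1 + h * c) ^ 2 * (1 + h * k)) ^ n := by gcongr
    _ = ((1 + h * c) ^ n) ^ 2 * (1 + h * k) ^ n := by rw [mul_pow, pow_right_comm]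
    _ ≤ Real.exp (c * T) ^ 2 * Real.exp (k * T) := by
      gcongr
      · exact one_add_mul_pow_le_exp hh hc hn
      · exact one_add_mul_pow_le_exp hh hk hn
    _ = Real.exp ((2 * c + k) * T) := by
      rw [← Real.exp_nat_mul, ← Real.exp_add]
      push_cast
      ring_nf

theorem exists_nat_mul_eq_of_lt {T δ : ℝ} (hT : 0 ≤ T) (hδ : 0 < δ) (Λ : ℝ≥0) :
    ∃ (n : ℕ) (h : ℝ≥0), n * (h : ℝ) = T ∧ h < δ ∧ h * Λ < 1 := by
  obtain ⟨n, hn⟩ := exists_nat_gt (max (T / δ) (T * Λ))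
  have hn₀ : (0 : ℝ) < n := (le_max_of_le_left (by positivity)).trans_lt hn
  obtain ⟨h, hh⟩ : ∃ h : ℝ≥0, (h : ℝ) = T / n := CanLift.prf _ (by positivity)
  refine ⟨n, h, hh ▸ mul_div_cancel₀ T hn₀.ne', ?_, ?_⟩
  · exact hh ▸ (div_lt_comm₀ hn₀ hδ).2 ((le_max_left _ _).trans_lt hn)
  · rw [← NNReal.coe_lt_coe, NNReal.coe_mul, hh, div_mul_eq_mul_div, NNReal.coe_one,
      div_lt_one hn₀]
    exact (le_max_right _ _).trans_lt hn

variable [FiniteDimensional ℝ E] [∀ t, IsProbabilityMeasure (μ t)]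
  [∀ t, IsProbabilityMeasure (ν t)]

theorem EulerConsistent.abs_integral_sub_le (hμ : EulerConsistent v μ a b)
    (hν : EulerConsistent v ν a b) (hμν : μ a = ν a) (hv : ∀ t, LipschitzWith Λ (v t)) {t : ℝ}
    (ht : t ∈ Icc a b) {ψ : E → ℝ} {A M : ℝ≥0} (hψ : TestFn ψ A M) {ε : ℝ} (hε : 0 < ε) :
    |∫ x, ψ x ∂μ t - ∫ x, ψ x ∂ν t| ≤ 2 * (t - a) * (M + A * Real.exp (Λ * (t - a))) * ε := by
  obtain ⟨K, hK⟩ := exists_contDiff_approx_lipschitzWith_fderiv (E := E) (F := E) Λ hε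
  let η := ε / Real.exp ((2 * Λ + K) * (t - a))
  have hη : 0 < η := by positivity
  obtain ⟨δ₁, hδ₁, hμ⟩ := hμ η hη
  obtain ⟨δ₂, hδ₂, hν⟩ := hν η hη
  have hta := sub_nonneg.2 ht.1
  obtain ⟨n, h, hnh, hhδ, hhΛ⟩ := exists_nat_mul_eq_of_lt hta (lt_min hδ₁ hδ₂) Λ
  have hmesh := (hμ.mono (min_le_left δ₁ δ₂)).abs_integral_sub_le_of_mesh
    (hν.mono (min_le_right δ₁ δ₂)) hμν hv hη.le hε.le hhδ hhΛ (fun s => hK _ (hv s)) n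
    (by linarith [ht.2]) hψ
  rw [hnh, add_sub_cancel] at hmesh
  calc _ ≤ _ := hmesh
    _ ≤ 2 * (t - a) * (η * M * Real.exp ((2 * Λ + K) * (t - a))
          + A * ε * Real.exp (Λ * (t - a))) := by
      gcongr
      · exact sq_one_add_mul_add_mul_pow_le_exp h.2 Λ.2 K.2 hnh
      · exact one_add_mul_pow_le_exp h.2 Λ.2 hnh
    _ = 2 * (t - a) * (M + A * Real.exp (Λ * (t - a))) * ε := by
      have hηε : η * Real.exp ((2 * Λ + K) * (t - a)) = ε := div_mul_cancel₀ _ (Real.exp_ne_zero _)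
      linear_combination 2 * (t - a) * M * hηε

theorem EulerConsistent.eq (hμ : EulerConsistent v μ a b) (hν : EulerConsistent v ν a b)
    (hμν : μ a = ν a) (hv : ∀ t, LipschitzWith Λ (v t)) {t : ℝ} (ht : t ∈ Icc a b) :
    μ t = ν t := by
  refine measure_eq_of_forall_integral_contDiff_eq fun ψ hψ hψs => ?_
  obtain ⟨A, M, hψ⟩ := exists_testFn hψ hψs
  have hlim : Tendsto (fun ε => 2 * (t - a) * (M + A * Real.exp (Λ * (t - a))) * ε) (𝓝[>] 0)
      (𝓝 0) := by
    simpa only [mul_zero] using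
      ((continuous_const_mul _).tendsto (0 : ℝ)).mono_left nhdsWithin_le_nhds
  have hle := ge_of_tendsto hlim (eventually_mem_nhdsWithin.mono fun ε hε =>
    hμ.abs_integral_sub_le hν hμν hv ht hψ hε)
  exact sub_eq_zero.1 (abs_nonpos_iff.1 hle)

end EulerScheme

section LagrangianFlow

variable {Ω E : Type*} [MeasurableSpace Ω] {P : Measure Ω} [IsProbabilityMeasure P]
  [NormedAddCommGroup E] {Λ Λ' : ℝ≥0} {w w' : E → E}

theorem memLp_comp_of_lipschitzWith (hw : LipschitzWith Λ w) (X : Lp E 2 P) :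
    MemLp (fun ω => w (X ω)) 2 P := by
  have hw₀ : LipschitzWith Λ fun x => w x - w 0 := fun x y => by
    rw [edist_sub_right]
    exact hw x y
  refine ((hw₀.comp_memLp (sub_self _) (Lp.memLp X)).add (memLp_const (w 0))).ae_eq ?_
  exact ae_of_all _ fun ω => sub_add_cancel _ _

/-- The superposition operator `X ↦ w ∘ X` on `L²(P)` of a Lipschitz vector field `w`, through
which the flow of `w` is lifted to random variables. -/
def superposition (hw : LipschitzWith Λ w) (X : Lp E 2 P) : Lp E 2 P :=
  (memLp_comp_of_lipschitzWith hw X).toLp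

theorem coeFn_superposition (hw : LipschitzWith Λ w) (X : Lp E 2 P) :
    superposition hw X =ᵐ[P] fun ω => w (X ω) :=
  MemLp.coeFn_toLp _

theorem lipschitzWith_superposition (hw : LipschitzWith Λ w) :
    LipschitzWith Λ (superposition hw : Lp E 2 P → Lp E 2 P) :=
  LipschitzWith.of_dist_le_mul fun X Y => by
    rw [dist_eq_norm, dist_eq_norm]
    refine Lp.norm_le_mul_norm_of_ae_le_mul ?_
    filter_upwards [Lp.coeFn_sub (superposition hw X) (superposition hw Y), Lp.coeFn_sub X Y,
      coeFn_superposition hw X, coeFn_superposition hw Y] with ω h₁ h₂ hX hY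
    rw [h₁, h₂, Pi.sub_apply, Pi.sub_apply, hX, hY]
    exact hw.norm_sub_le _ _

theorem norm_superposition_sub_le (hw : LipschitzWith Λ w) (hw' : LipschitzWith Λ' w') {ε : ℝ}
    (hww' : ∀ x, ‖w x - w' x‖ ≤ ε) (X : Lp E 2 P) :
    ‖superposition hw X - superposition hw' X‖ ≤ ε := by
  have hε : 0 ≤ ε := (norm_nonneg _).trans (hww' 0)
  have hae : ∀ᵐ ω ∂P, ‖(superposition hw X - superposition hw' X) ω‖ ≤ ε := by
    filter_upwards [Lp.coeFn_sub (superposition hw X) (superposition hw' X),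
      coeFn_superposition hw X, coeFn_superposition hw' X] with ω h hω hω'
    rw [h, Pi.sub_apply, hω, hω']
    exact hww' _
  simpa [measureUnivNNReal] using Lp.norm_le_of_ae_bound hε hae

theorem norm_superposition_le (hw : LipschitzWith Λ w) {C c : ℝ} (hC : 0 ≤ C) (hc : 0 ≤ c)
    (hgrowth : ∀ x, ‖w x‖ ≤ C * (c + ‖x‖)) (X : Lp E 2 P) :
    ‖superposition hw X‖ ≤ C * (c + ‖X‖) := by
  refine (Lp.norm_le_mul_norm_of_ae_le_mul (g := (memLp_const_add_norm c X).toLp) ?_).trans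
    (mul_le_mul_of_nonneg_left (norm_toLp_const_add_norm_le hc X) hC)
  filter_upwards [coeFn_superposition hw X, (memLp_const_add_norm c X).coeFn_toLp] with ω hw hX
  rw [hw, hX, Real.norm_of_nonneg (by positivity)]
  exact hgrowth _

theorem TestFn.abs_integral_comp_sub_le [NormedSpace ℝ E] {ψ : E → ℝ} {A M : ℝ≥0}
    (hψ : TestFn ψ A M) (X Y : Lp E 2 P) :
    |∫ ω, ψ (X ω) ∂P - ∫ ω, ψ (Y ω) ∂P| ≤ A * ‖X - Y‖ := by
  rw [← integral_sub (hψ.integrable_comp (Lp.aestronglyMeasurable X))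
    (hψ.integrable_comp (Lp.aestronglyMeasurable Y)), ← Real.norm_eq_abs]
  calc ‖∫ ω, ψ (X ω) - ψ (Y ω) ∂P‖ ≤ ∫ ω, A * ‖(X - Y) ω‖ ∂P := by
        refine norm_integral_le_of_norm_le
          (((Lp.memLp (X - Y)).integrable one_le_two).norm.const_mul _) ?_
        filter_upwards [Lp.coeFn_sub X Y] with ω hω
        rw [hω]
        exact hψ.lipschitzWith.norm_sub_le _ _
    _ ≤ A * ‖X - Y‖ := by
        rw [integral_const_mul]
        exact mul_le_mul_of_nonneg_left (integral_norm_le_norm _) A.2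

theorem norm_sub_sub_smul_le_of_hasDerivWithinAt {F : Type*} [NormedAddCommGroup F]
    [NormedSpace ℝ F] {ξ V : ℝ → F} {s t η : ℝ} (hst : s ≤ t)
    (hξ : ∀ r ∈ Icc s t, HasDerivWithinAt ξ (V r) (Icc s t) r)
    (hV : ∀ r ∈ Icc s t, ‖V r - V s‖ ≤ η) : ‖ξ t - ξ s - (t - s) • V s‖ ≤ (t - s) * η := by
  have hlin : ∀ r ∈ Icc s t, HasDerivWithinAt (fun r => ξ r - r • V s) (V r - V s) (Icc s t) r :=
    fun r hr => by
      have hid := (hasDerivWithinAt_id r (Icc s t)).smul_const (V s)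
      rw [one_smul] at hid
      exact (hξ r hr).sub hid
  have hle := (convex_Icc s t).norm_image_sub_le_of_norm_hasDerivWithin_le hlin hV
    (left_mem_Icc.2 hst) (right_mem_Icc.2 hst)
  rw [Real.norm_of_nonneg (sub_nonneg.2 hst), mul_comm] at hle
  convert hle using 2
  rw [sub_smul]
  abel

variable {Q : Type*} [PseudoMetricSpace Q] {g : E → Q → E} {m : ℝ → Q}
  {a b : ℝ}

theorem lipschitzWith_apply_left (hg : LipschitzWith Λ g.uncurry) (q : Q) :
    LipschitzWith Λ fun x => g x q := by
  have h := hg.comp (LipschitzWith.prodMk_right q)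
  rwa [mul_one] at h

theorem norm_apply_sub_apply_le (hg : LipschitzWith Λ g.uncurry) (x : E) (q q' : Q) :
    ‖g x q - g x q'‖ ≤ Λ * dist q q' := by
  have h := (hg.comp (LipschitzWith.prodMk_left x)).dist_le_mul q q'
  rwa [mul_one, dist_eq_norm] at h

theorem lipschitzWith_uncurry_superposition (hg : LipschitzWith Λ g.uncurry) :
    LipschitzWith (Λ + Λ) (Function.uncurry fun q (X : Lp E 2 P) =>
      superposition (lipschitzWith_apply_left hg q) X) :=
  LipschitzWith.uncurry (fun X => LipschitzWith.of_dist_le_mul fun q q' => by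
    rw [dist_eq_norm]
    exact norm_superposition_sub_le _ _ (fun x => norm_apply_sub_apply_le hg x q q') X)
    fun q => lipschitzWith_superposition (lipschitzWith_apply_left hg q)

variable [NormedSpace ℝ E]

/-- `ξ` solves the ordinary differential equation `ξ' = g (ξ, m t)` in `L²(P)` on `[a, b]`: it is
the Lagrangian description of a solution of the continuity equation with velocity `g (·, m t)`. -/
def IsLagrangianFlow (hg : LipschitzWith Λ g.uncurry) (m : ℝ → Q) (ξ : ℝ → Lp E 2 P) (a b : ℝ) :
    Prop :=
  ∀ t ∈ Icc a b, HasDerivWithinAt ξ (superposition (lipschitzWith_apply_left hg (m t)) (ξ t))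
    (Icc a b) t

theorem exists_isLagrangianFlow [CompleteSpace E] (hg : LipschitzWith Λ g.uncurry) (hab : a ≤ b)
    (hm : ContinuousOn m (Icc a b)) (X : Lp E 2 P) :
    ∃ ξ, ξ a = X ∧ IsLagrangianFlow hg m ξ a b :=
  exists_hasDerivWithinAt_Icc_of_lipschitzWith
    (v := fun t => superposition (lipschitzWith_apply_left hg (m t))) hab
    (fun _ _ => lipschitzWith_superposition _)
    (fun _ => (lipschitzWith_uncurry_superposition hg).continuous.comp_continuousOn
      (hm.prodMk continuousOn_const)) X

namespace IsLagrangianFlow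

variable {hg : LipschitzWith Λ g.uncurry} {ξ : ℝ → Lp E 2 P}

theorem continuousOn (hξ : IsLagrangianFlow hg m ξ a b) : ContinuousOn ξ (Icc a b) :=
  HasDerivWithinAt.continuousOn hξ

theorem mono {s t : ℝ} (hξ : IsLagrangianFlow hg m ξ a b) (has : a ≤ s) (htb : t ≤ b) :
    IsLagrangianFlow hg m ξ s t :=
  fun r hr => (hξ r (Icc_subset_Icc has htb hr)).mono (Icc_subset_Icc has htb)

theorem exists_norm_sub_sub_smul_le (hξ : IsLagrangianFlow hg m ξ a b)
    (hm : ContinuousOn m (Icc a b)) {η : ℝ} (hη : 0 < η) :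
    ∃ δ > 0, ∀ s t, a ≤ s → s ≤ t → t ≤ b → t - s < δ →
      ‖ξ t - ξ s - (t - s) • superposition (lipschitzWith_apply_left hg (m s)) (ξ s)‖
        ≤ (t - s) * η := by
  have hcont : ContinuousOn (fun t => superposition (lipschitzWith_apply_left hg (m t)) (ξ t))
      (Icc a b) := (lipschitzWith_uncurry_superposition hg).continuous.comp_continuousOn
    (hm.prodMk hξ.continuousOn)
  obtain ⟨δ, hδ, hmod⟩ := Metric.uniformContinuousOn_iff.1
    (isCompact_Icc.uniformContinuousOn_of_continuous hcont) η hη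
  refine ⟨δ, hδ, fun s t has hst htb hδst =>
    norm_sub_sub_smul_le_of_hasDerivWithinAt hst (hξ.mono has htb) fun r hr => ?_⟩
  rw [← dist_eq_norm]
  refine (hmod r ⟨has.trans hr.1, hr.2.trans htb⟩ s ⟨has, hst.trans htb⟩ ?_).le
  rw [Real.dist_eq, abs_of_nonneg (sub_nonneg.2 hr.1)]
  linarith [hr.2]

theorem eulerConsistent_map [MeasurableSpace E] [BorelSpace E]
    (hξ : IsLagrangianFlow hg m ξ a b) (hm : ContinuousOn m (Icc a b)) :
    EulerConsistent (fun t x => g x (m t)) (fun t => P.map (ξ t)) a b := fun η hη => by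
  obtain ⟨δ, hδ, hstep⟩ := hξ.exists_norm_sub_sub_smul_le hm hη
  refine ⟨δ, hδ, fun s h has hsb hh ψ A M hψ => ?_⟩
  have hlip := lipschitzWith_apply_left hg (m s)
  have hmeas : ∀ t, AEMeasurable (ξ t) P := fun t => (Lp.aestronglyMeasurable (ξ t)).aemeasurable
  have hshift : ∫ ω, ψ (ξ s ω + (h : ℝ) • g (ξ s ω) (m s)) ∂P =
      ∫ ω, ψ ((ξ s + (h : ℝ) • superposition hlip (ξ s)) ω) ∂P := by
    refine integral_congr_ae ?_
    filter_upwards [Lp.coeFn_add (ξ s) ((h : ℝ) • superposition hlip (ξ s)),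
      Lp.coeFn_smul (h : ℝ) (superposition hlip (ξ s)), coeFn_superposition hlip (ξ s)]
      with ω h₁ h₂ h₃
    rw [h₁, Pi.add_apply, h₂, Pi.smul_apply, h₃]
  have hcont : Continuous fun x => ψ (x + (h : ℝ) • g x (m s)) :=
    hψ.continuous.comp (continuous_id.add (hlip.continuous.const_smul _))
  rw [integral_map (hmeas _) hψ.continuous.aestronglyMeasurable,
    integral_map (hmeas _) hcont.aestronglyMeasurable, hshift]
  have hle := hstep s (s + h) has (le_add_of_nonneg_right h.2) hsb (by simpa using hh)
  rw [add_sub_cancel_left, sub_sub] at hle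
  calc _ ≤ A * (h * η) := (hψ.abs_integral_comp_sub_le _ _).trans
        (mul_le_mul_of_nonneg_left hle A.2)
    _ ≤ M * (h * η) := mul_le_mul_of_nonneg_right hψ.le (mul_nonneg h.2 hη.le)
    _ = h * (η * M) := by ring

end IsLagrangianFlow

end LagrangianFlow

section DuBoisReymond

open scoped ContDiff

variable {a b : ℝ}

theorem hasCompactSupport_of_tsupport_subset_Ioo {η : ℝ → ℝ} (hη : tsupport η ⊆ Ioo a b) :
    HasCompactSupport η :=
  isCompact_Icc.of_isClosed_subset (isClosed_tsupport η) (hη.trans Ioo_subset_Icc_self)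

theorem eq_zero_of_tsupport_subset_Ioo {η : ℝ → ℝ} (hη : tsupport η ⊆ Ioo a b) {t : ℝ}
    (ht : t ∉ Ioo a b) : η t = 0 :=
  image_eq_zero_of_notMem_tsupport fun h => ht (hη h)

theorem exists_Icc_superset_of_isCompact_of_subset_Ioo {K : Set ℝ} (hK : IsCompact K)
    (hKI : K ⊆ Ioo a b) : ∃ c d, a < c ∧ d < b ∧ K ⊆ Icc c d := by
  rcases K.eq_empty_or_nonempty with rfl | hne
  · exact ⟨a + 1, b - 1, lt_add_one a, sub_one_lt b, empty_subset _⟩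
  · exact ⟨sInf K, sSup K, (hKI (hK.sInf_mem hne)).1, (hKI (hK.sSup_mem hne)).2, fun x hx =>
      ⟨csInf_le hK.bddBelow hx, le_csSup hK.bddAbove hx⟩⟩

theorem exists_contDiff_integral_eq_one (hab : a < b) :
    ∃ ρ : ℝ → ℝ, ContDiff ℝ ∞ ρ ∧ tsupport ρ ⊆ Ioo a b ∧ ∫ t in a..b, ρ t = 1 := by
  let bump : ContDiffBump ((a + b) / 2) := ⟨(b - a) / 8, (b - a) / 4, by linarith, by linarith⟩
  have hsupp : tsupport (bump.normed volume) ⊆ Ioo a b := by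
    have hr : bump.rOut = (b - a) / 4 := rfl
    rw [bump.tsupport_normed_eq, Real.closedBall_eq_Icc, hr]
    exact Icc_subset_Ioo (by linarith) (by linarith)
  refine ⟨bump.normed volume, bump.contDiff_normed, hsupp, ?_⟩
  rw [intervalIntegral.integral_eq_integral_of_support_subset
    (((subset_tsupport _).trans hsupp).trans Ioo_subset_Ioc_self)]
  exact bump.integral_normed

theorem exists_contDiff_deriv_eq_of_integral_eq_zero {k : ℝ → ℝ} (hk : ContDiff ℝ ∞ k)
    (hks : tsupport k ⊆ Ioo a b) (hint : ∫ t in a..b, k t = 0) :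
    ∃ η : ℝ → ℝ, ContDiff ℝ ∞ η ∧ tsupport η ⊆ Ioo a b ∧ deriv η = k := by
  obtain ⟨c, d, hac, hdb, hcd⟩ := exists_Icc_superset_of_isCompact_of_subset_Ioo
    (hasCompactSupport_of_tsupport_subset_Ioo hks) hks
  have hk₀ : ∀ s t, Disjoint (uIcc s t) (Icc c d) → ∫ x in s..t, k x = 0 := fun s t hst => by
    rw [intervalIntegral.integral_congr (g := fun _ => (0 : ℝ)) fun x hx =>
      image_eq_zero_of_notMem_tsupport fun h => disjoint_left.1 hst hx (hcd h),
      intervalIntegral.integral_zero]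
  have hderiv : ∀ t, HasDerivAt (fun t => ∫ x in a..t, k x) (k t) t := fun t =>
    (hk.continuous.integral_hasStrictDerivAt a t).hasDerivAt
  have hderiv_eq : deriv (fun t => ∫ x in a..t, k x) = k := funext fun t => (hderiv t).deriv
  refine ⟨fun t => ∫ x in a..t, k x, ?_, ?_, hderiv_eq⟩
  · rw [contDiff_infty_iff_deriv, hderiv_eq]
    exact ⟨fun t => (hderiv t).differentiableAt, hk⟩
  · refine (closure_minimal (fun t ht => ?_) isClosed_Icc).trans (Icc_subset_Ioo hac hdb)
    by_contra htcd
    refine ht ?_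
    rcases lt_or_ge t c with htc | hct
    · exact hk₀ a t (disjoint_left.2 fun x hx h => (hx.2.trans_lt (max_lt hac htc)).not_ge h.1)
    · have hdt : d < t := lt_of_not_ge fun h => htcd ⟨hct, h⟩
      have htb := hk₀ t b (disjoint_left.2 fun x hx h =>
        ((lt_min hdt hdb).trans_le hx.1).not_ge h.2)
      rwa [← intervalIntegral.integral_add_adjacent_intervals
        (hk.continuous.intervalIntegrable a t) (hk.continuous.intervalIntegrable t b), htb,
        add_zero] at hint

theorem exists_eqOn_const_of_integral_deriv_mul_eq_zero {H : ℝ → ℝ} (hab : a < b)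
    (hH : ContinuousOn H (Icc a b))
    (h : ∀ η : ℝ → ℝ, ContDiff ℝ ∞ η → tsupport η ⊆ Ioo a b → ∫ t in a..b, deriv η t * H t = 0) :
    ∃ c, EqOn H (fun _ => c) (Icc a b) := by
  obtain ⟨ρ, hρ, hρs, hρ₁⟩ := exists_contDiff_integral_eq_one hab
  have hmul : ∀ {g : ℝ → ℝ}, ContDiff ℝ ∞ g →
      IntervalIntegrable (fun t => g t * H t) volume a b := fun hg =>
    (hg.continuous.continuousOn.mul hH).intervalIntegrable_of_Icc hab.le
  let c := ∫ t in a..b, ρ t * H t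
  have hae : ∀ᵐ t, t ∈ Ioo a b → H t - c = 0 := by
    refine isOpen_Ioo.ae_eq_zero_of_integral_contDiff_smul_eq_zero
      (((hH.mono Ioo_subset_Icc_self).sub continuousOn_const).locallyIntegrableOn
        measurableSet_Ioo) fun g hg _ hgs => ?_
    let I := ∫ t in a..b, g t
    have hI : ∫ t in a..b, (g t - I * ρ t) = 0 := by
      rw [intervalIntegral.integral_sub (hg.continuous.intervalIntegrable _ _)
        ((hρ.continuous.const_mul I).intervalIntegrable _ _), intervalIntegral.integral_const_mul,
        hρ₁, mul_one, sub_self]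
    have hsupp : tsupport (fun t => g t - I * ρ t) ⊆ Ioo a b :=
      (tsupport_sub g fun t => I * ρ t).trans
        (union_subset hgs ((tsupport_mul_subset_right (f := fun _ => I)).trans hρs))
    obtain ⟨η, hη, hηs, hη'⟩ := exists_contDiff_deriv_eq_of_integral_eq_zero
      (hg.sub (contDiff_const.mul hρ)) hsupp hI
    have hweak := h η hη hηs
    simp only [hη', sub_mul, mul_assoc] at hweak
    rw [intervalIntegral.integral_sub (hmul hg) ((hmul hρ).const_mul I),
      intervalIntegral.integral_const_mul, ← intervalIntegral.integral_mul_const] at hweak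
    rw [← intervalIntegral.integral_eq_integral_of_support_subset (a := a) (b := b)]
    · simp only [smul_eq_mul, mul_sub]
      rwa [intervalIntegral.integral_sub (hmul hg)
        ((hg.continuous.mul_const c).intervalIntegrable _ _)]
    · exact ((Function.support_smul_subset_left g _).trans ((subset_tsupport g).trans hgs)).trans
        Ioo_subset_Ioc_self
  refine ⟨c, Measure.eqOn_Icc_of_ae_eq volume hab.ne ?_ hH continuousOn_const⟩
  rw [← restrict_Ioo_eq_restrict_Icc]
  exact (ae_restrict_iff' measurableSet_Ioo).2 (hae.mono fun t h ht => sub_eq_zero.1 (h ht))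

theorem continuousOn_primitive_Icc {G : ℝ → ℝ} (hab : a ≤ b) (hG : ContinuousOn G (Icc a b)) :
    ContinuousOn (fun t => ∫ r in a..t, G r) (Icc a b) := by
  have hJ := intervalIntegral.continuousOn_primitive_interval (μ := volume) (f := G) (a := a)
    (b := b) (by rw [uIcc_of_le hab]; exact hG.integrableOn_Icc)
  rwa [uIcc_of_le hab] at hJ

theorem integral_mul_eq_neg_integral_deriv_mul_primitive {G η : ℝ → ℝ} (hab : a ≤ b)
    (hG : ContinuousOn G (Icc a b)) (hη : ContDiff ℝ ∞ η) (hηs : tsupport η ⊆ Ioo a b) :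
    ∫ t in a..b, η t * G t = -∫ t in a..b, deriv η t * ∫ r in a..t, G r := by
  have hJ' : ∀ r ∈ Ioo a b, HasDerivAt (fun t => ∫ r in a..t, G r) (G r) r := fun r hr => by
    have hGr := Icc_mem_nhds hr.1 hr.2
    exact intervalIntegral.integral_hasDerivAt_right
      ((hG.mono (Icc_subset_Icc_right hr.2.le)).intervalIntegrable_of_Icc hr.1.le)
      ⟨Icc a b, hGr, hG.aestronglyMeasurable measurableSet_Icc⟩ (hG.continuousAt hGr)
  rw [intervalIntegral.integral_mul_deriv_eq_deriv_mul_of_hasDerivAt (u' := deriv η)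
      (v := fun t => ∫ r in a..t, G r) hη.continuous.continuousOn
      (by rw [uIcc_of_le hab]; exact continuousOn_primitive_Icc hab hG)
      (fun r _ => (hη.differentiable (by simp) r).hasDerivAt)
      (fun r hr => hJ' r (by rwa [min_eq_left hab, max_eq_right hab] at hr))
      ((hη.continuous_deriv (by simp)).intervalIntegrable a b) (hG.intervalIntegrable_of_Icc hab),
    eq_zero_of_tsupport_subset_Ioo hηs (t := a) (by simp),
    eq_zero_of_tsupport_subset_Ioo hηs (t := b) (by simp), zero_mul, zero_mul, sub_self, zero_sub]

theorem sub_eq_integral_of_integral_deriv_mul_add_mul_eq_zero {F G : ℝ → ℝ} (hab : a < b)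
    (hF : ContinuousOn F (Icc a b)) (hG : ContinuousOn G (Icc a b))
    (h : ∀ η : ℝ → ℝ, ContDiff ℝ ∞ η → tsupport η ⊆ Ioo a b →
      ∫ t in a..b, (deriv η t * F t + η t * G t) = 0)
    {s t : ℝ} (hs : s ∈ Icc a b) (ht : t ∈ Icc a b) : F t - F s = ∫ r in s..t, G r := by
  let J : ℝ → ℝ := fun t => ∫ r in a..t, G r
  have hJ : ContinuousOn J (Icc a b) := continuousOn_primitive_Icc hab.le hG
  have hweak : ∀ η : ℝ → ℝ, ContDiff ℝ ∞ η → tsupport η ⊆ Ioo a b →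
      ∫ t in a..b, deriv η t * (F t - J t) = 0 := fun η hη hηs => by
    have hint : ∀ {u v : ℝ → ℝ}, Continuous u → ContinuousOn v (Icc a b) →
        IntervalIntegrable (fun t => u t * v t) volume a b := fun hu hv =>
      (hu.continuousOn.mul hv).intervalIntegrable_of_Icc hab.le
    have hη' : Continuous (deriv η) := hη.continuous_deriv (by simp)
    have hFG := h η hη hηs
    rw [intervalIntegral.integral_add (hint hη' hF) (hint hη.continuous hG),
      integral_mul_eq_neg_integral_deriv_mul_primitive hab.le hG hη hηs, ← sub_eq_add_neg] at hFG
    simp only [mul_sub]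
    rwa [intervalIntegral.integral_sub (hint hη' hF) (hint hη' hJ)]
  obtain ⟨c, hc⟩ := exists_eqOn_const_of_integral_deriv_mul_eq_zero hab (hF.sub hJ) hweak
  have hGi : ∀ {r}, r ∈ Icc a b → IntervalIntegrable G volume a r := fun hr =>
    (hG.mono (Icc_subset_Icc_right hr.2)).intervalIntegrable_of_Icc hr.1
  have hst := intervalIntegral.integral_interval_sub_left (hGi ht) (hGi hs)
  have hcs : F s - J s = c := hc hs
  have hct : F t - J t = c := hc ht
  simp only [J] at hcs hct
  linarith

end DuBoisReymond

section WeakSolutions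

open ProbabilityTheory
open scoped ContDiff

variable {d : ℕ} {ψ : Ed d → ℝ} {A M Λ : ℝ≥0} {w : Ed d → Ed d} {μ ν : P2 d}

namespace TestFn

theorem integrable (h : TestFn ψ A M) (μ : P2 d) : Integrable ψ μ.1 :=
  have := μ.2.1
  h.integrable_comp aestronglyMeasurable_id

theorem integrable_fderiv_apply (h : TestFn ψ A M) (hw : Continuous w) (μ : P2 d) :
    Integrable (fun x => fderiv ℝ ψ x (w x)) μ.1 :=
  have := μ.2.1
  have hc := h.continuous_fderiv_apply hw
  have ⟨C, hC⟩ := hc.bounded_above_of_compact_support (h.hasCompactSupport_fderiv_apply w)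
  .of_bound hc.aestronglyMeasurable C (ae_of_all _ hC)

theorem abs_integral_sub_le_W2 (h : TestFn ψ A M) (μ ν : P2 d) :
    |∫ x, ψ x ∂μ.1 - ∫ x, ψ x ∂ν.1| ≤ A * (1 + varsigma2 μ) * W2 μ ν :=
  abs_integral_sub_integral_le_W2 A.2 (h.integrable μ) (h.integrable ν) fun x y =>
    (h.lipschitzWith.norm_sub_le x y).trans <| mul_le_mul_of_nonneg_left
      (le_mul_of_one_le_right (norm_nonneg _) (le_add_of_nonneg_right (norm_nonneg x))) A.2

theorem continuous_integral (h : TestFn ψ A M) : Continuous fun μ : P2 d => ∫ x, ψ x ∂μ.1 :=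
  continuous_iff_continuousAt.2 fun μ =>
    continuousAt_of_locally_lipschitz one_pos (A * (1 + varsigma2 μ)) fun ν _ => by
      rw [dist_comm, dist_comm ν]
      exact h.abs_integral_sub_le_W2 μ ν

theorem abs_integral_comp_add_smul_sub_sub_le (h : TestFn ψ A M) (hw : Continuous w) {G : ℝ}
    (hG : ∀ x, ‖w x‖ ≤ G * (1 + ‖x‖)) (μ : P2 d) (c : ℝ) :
    |∫ x, ψ (x + c • w x) ∂μ.1 - ∫ x, ψ x ∂μ.1 - c * ∫ x, fderiv ℝ ψ x (w x) ∂μ.1| ≤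
      M * c ^ 2 * (G * (1 + varsigma2 μ)) ^ 2 := by
  have := μ.2.1
  have hcomp : Integrable (fun x => ψ (x + c • w x)) μ.1 := h.integrable_comp (by fun_prop)
  have hdiff : Integrable (fun x => ψ (x + c • w x) - ψ x) μ.1 := hcomp.sub (h.integrable μ)
  rw [← integral_const_mul, ← integral_sub hcomp (h.integrable μ),
    ← integral_sub hdiff ((h.integrable_fderiv_apply hw μ).const_mul c), ← Real.norm_eq_abs]
  have hsq : Integrable (fun x => M * c ^ 2 * G ^ 2 * (1 + ‖x‖) ^ 2) μ.1 :=
    ((memLp_const (1 : ℝ)).add μ.2.memLp_id.norm).integrable_sq.const_mul _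
  have hidLp : ∫ x, (1 + ‖x‖) ^ 2 ∂μ.1 ≤ (1 + varsigma2 μ) ^ 2 := by
    rw [varsigma2_eq_norm μ.hasLaw_idLp]
    refine (integral_congr_ae ?_).trans_le (integral_one_add_norm_sq_le μ.idLp)
    filter_upwards [μ.coeFn_idLp] with x hx
    rw [hx, id]
  calc _ ≤ ∫ x, M * c ^ 2 * G ^ 2 * (1 + ‖x‖) ^ 2 ∂μ.1 := by
        refine norm_integral_le_of_norm_le hsq (ae_of_all _ fun x => ?_)
        have htaylor := h.abs_sub_sub_fderiv_le x (c • w x)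
        rw [map_smul, smul_eq_mul] at htaylor
        refine htaylor.trans ?_
        rw [norm_smul, mul_pow, Real.norm_eq_abs, sq_abs, mul_assoc, mul_assoc, ← mul_pow G]
        gcongr
        exact hG x
    _ ≤ M * c ^ 2 * (G * (1 + varsigma2 μ)) ^ 2 := by
        rw [integral_const_mul, mul_pow, ← mul_assoc]
        gcongr

end TestFn

variable {g : Ed d → P2 d → Ed d}

theorem norm_apply_le_of_lipschitzWith (hg : LipschitzWith Λ g.uncurry) (x : Ed d) (μ : P2 d) :
    ‖g x μ‖ ≤ (‖g 0 μ‖ + Λ) * (1 + ‖x‖) := by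
  have hlip := (lipschitzWith_apply_left hg μ).norm_sub_le x 0
  rw [sub_zero] at hlip
  have htri := norm_le_norm_add_norm_sub' (g x μ) (g 0 μ)
  nlinarith [mul_nonneg (norm_nonneg (g 0 μ)) (norm_nonneg x), Λ.2]

theorem TestFn.abs_integral_fderiv_apply_sub_le_W2 (h : TestFn ψ A M)
    (hg : LipschitzWith Λ g.uncurry) (μ ν : P2 d) :
    |∫ x, fderiv ℝ ψ x (g x μ) ∂μ.1 - ∫ x, fderiv ℝ ψ x (g x ν) ∂ν.1| ≤
      M * ((‖g 0 μ‖ + 3 * Λ) * (1 + varsigma2 μ)) * W2 μ ν := by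
  have := ν.2.1
  have hlip := fun q => lipschitzWith_apply_left hg q
  have hi := fun q => h.integrable_fderiv_apply (hlip q).continuous
  have hmeasure := abs_integral_sub_integral_le_W2 (by positivity) (hi μ μ) (hi μ ν)
    (h.abs_fderiv_apply_sub_le (hlip μ) fun x => norm_apply_le_of_lipschitzWith hg x μ)
  have hfield : |∫ x, fderiv ℝ ψ x (g x μ) ∂ν.1 - ∫ x, fderiv ℝ ψ x (g x ν) ∂ν.1| ≤
      M * (Λ * W2 μ ν) := by
    rw [← integral_sub (hi μ ν) (hi ν ν)]
    have hpt : ∀ x, ‖fderiv ℝ ψ x (g x μ) - fderiv ℝ ψ x (g x ν)‖ ≤ M * (Λ * W2 μ ν) := fun x => by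
      rw [← map_sub]
      exact ((fderiv ℝ ψ x).le_opNorm _).trans (mul_le_mul ((h.norm_fderiv_le x).trans h.le)
        (norm_apply_sub_apply_le hg x μ ν) (norm_nonneg _) M.2)
    simpa only [Real.norm_eq_abs, probReal_univ, mul_one] using
      norm_integral_le_of_norm_le_const (ae_of_all ν.1 hpt)
  have hς : M * (Λ * W2 μ ν) ≤ M * (Λ * W2 μ ν) * (1 + varsigma2 μ) :=
    le_mul_of_one_le_right (mul_nonneg M.2 (mul_nonneg Λ.2 (W2_nonneg μ ν)))
      (le_add_of_nonneg_right (varsigma2_nonneg μ))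
  linarith [abs_sub_le (∫ x, fderiv ℝ ψ x (g x μ) ∂μ.1) (∫ x, fderiv ℝ ψ x (g x μ) ∂ν.1)
    (∫ x, fderiv ℝ ψ x (g x ν) ∂ν.1)]

theorem TestFn.continuous_integral_fderiv_apply (h : TestFn ψ A M)
    (hg : LipschitzWith Λ g.uncurry) :
    Continuous fun μ : P2 d => ∫ x, fderiv ℝ ψ x (g x μ) ∂μ.1 :=
  continuous_iff_continuousAt.2 fun μ => continuousAt_of_locally_lipschitz one_pos
    (M * ((‖g 0 μ‖ + 3 * Λ) * (1 + varsigma2 μ))) fun ν _ => by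
      rw [dist_comm, dist_comm ν]
      exact h.abs_integral_fderiv_apply_sub_le_W2 hg μ ν

namespace SolvesCE

variable {U : Type*} {f : Ed d → P2 d → U → Ed d} {u : U} {m : ℝ → P2 d} {a b : ℝ}

theorem continuousOn (hm : SolvesCE f u m a b) : ContinuousOn m (Icc a b) :=
  continuousOn_Icc_of_W2ContinuousOn hm.1

theorem integral_deriv_mul_add_mul_eq_zero (hf : ∀ μ, Continuous fun x => f x μ u)
    (hm : SolvesCE f u m a b) (hψ : TestFn ψ A M) {η : ℝ → ℝ} (hη : ContDiff ℝ ∞ η)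
    (hηs : tsupport η ⊆ Ioo a b) :
    ∫ t in a..b, (deriv η t * ∫ x, ψ x ∂(m t).1 +
      η t * ∫ x, fderiv ℝ ψ x (f x (m t) u) ∂(m t).1) = 0 := by
  have hsupp : tsupport (fun p : Ed d × ℝ => ψ p.1 * η p.2) ⊆ tsupport ψ ×ˢ tsupport η :=
    closure_minimal (fun p hp => ⟨subset_tsupport _ (left_ne_zero_of_mul hp),
      subset_tsupport _ (right_ne_zero_of_mul hp)⟩)
      ((isClosed_tsupport ψ).prod (isClosed_tsupport η))
  have hcompact : HasCompactSupport fun p : Ed d × ℝ => ψ p.1 * η p.2 :=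
    (hψ.hasCompactSupport.isCompact.prod
      (hasCompactSupport_of_tsupport_subset_Ioo hηs).isCompact).of_isClosed_subset
      (isClosed_tsupport _) hsupp
  rw [← hm.2 (fun p => ψ p.1 * η p.2)
    ((hψ.contDiff.comp contDiff_fst).mul (hη.comp contDiff_snd)) hcompact
    (hsupp.trans (prod_mono (subset_univ _) hηs))]
  refine intervalIntegral.integral_congr fun t _ => ?_
  have hDψ := hψ.integrable_fderiv_apply (hf (m t)) (m t)
  rw [← integral_const_mul, ← integral_const_mul,
    ← integral_add ((hψ.integrable (m t)).const_mul _) (hDψ.const_mul _)]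
  refine integral_congr_ae (ae_of_all _ fun x => ?_)
  simp only [deriv_const_mul_field, fderiv_mul_const (hψ.differentiable x), smul_apply,
    smul_eq_mul, mul_comm]

theorem integral_sub_eq_intervalIntegral
    (hf : LipschitzWith Λ (Function.uncurry fun x μ => f x μ u)) (hab : a < b)
    (hm : SolvesCE f u m a b) (hψ : TestFn ψ A M) {s t : ℝ} (hs : s ∈ Icc a b)
    (ht : t ∈ Icc a b) : ∫ x, ψ x ∂(m t).1 - ∫ x, ψ x ∂(m s).1 =
      ∫ r in s..t, ∫ x, fderiv ℝ ψ x (f x (m r) u) ∂(m r).1 :=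
  sub_eq_integral_of_integral_deriv_mul_add_mul_eq_zero hab
    (F := fun t => ∫ x, ψ x ∂(m t).1) (hψ.continuous_integral.comp_continuousOn hm.continuousOn)
    ((hψ.continuous_integral_fderiv_apply hf).comp_continuousOn hm.continuousOn)
    (fun _ => hm.integral_deriv_mul_add_mul_eq_zero
      (fun μ => (lipschitzWith_apply_left hf μ).continuous) hψ) hs ht

theorem abs_integral_sub_integral_comp_add_smul_le
    (hf : LipschitzWith Λ (Function.uncurry fun x μ => f x μ u)) (hab : a < b)
    (hm : SolvesCE f u m a b) (hψ : TestFn ψ A M) {s ρ : ℝ} {h : ℝ≥0} (has : a ≤ s)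
    (hsb : s + h ≤ b) (hρ : ∀ r ∈ Icc s (s + h), W2 (m s) (m r) ≤ ρ) :
    |∫ x, ψ x ∂(m (s + h)).1 - ∫ x, ψ (x + (h : ℝ) • f x (m s) u) ∂(m s).1| ≤
      h * M * ((‖f 0 (m s) u‖ + 3 * Λ) * (1 + varsigma2 (m s)) * ρ
        + h * ((‖f 0 (m s) u‖ + Λ) * (1 + varsigma2 (m s))) ^ 2) := by
  let Φ : P2 d → ℝ := fun μ => ∫ x, fderiv ℝ ψ x (f x μ u) ∂μ.1
  have hsh : s ≤ s + h := le_add_of_nonneg_right h.2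
  have hς := varsigma2_nonneg (m s)
  have hΦ : IntervalIntegrable (fun r => Φ (m r)) volume s (s + h) :=
    ((hψ.continuous_integral_fderiv_apply hf).comp_continuousOn (hm.continuousOn.mono
      (Icc_subset_Icc has hsb))).intervalIntegrable_of_Icc hsh
  have hdrift : |∫ r in s..s + h, (Φ (m r) - Φ (m s))| ≤
      M * ((‖f 0 (m s) u‖ + 3 * Λ) * (1 + varsigma2 (m s))) * ρ * h := by
    have hpt : ∀ r ∈ uIoc s (s + h), ‖Φ (m r) - Φ (m s)‖ ≤
        M * ((‖f 0 (m s) u‖ + 3 * Λ) * (1 + varsigma2 (m s))) * ρ := fun r hr => by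
      rw [norm_sub_rev]
      refine (hψ.abs_integral_fderiv_apply_sub_le_W2 hf (m s) (m r)).trans ?_
      gcongr
      exact hρ r (Ioc_subset_Icc_self (uIoc_of_le hsh ▸ hr))
    have hle := intervalIntegral.norm_integral_le_of_norm_le_const hpt
    rwa [add_sub_cancel_left, NNReal.abs_eq] at hle
  have htaylor := hψ.abs_integral_comp_add_smul_sub_sub_le
    (lipschitzWith_apply_left hf (m s)).continuous
    (fun x => norm_apply_le_of_lipschitzWith hf x (m s)) (m s) h
  have hweak := hm.integral_sub_eq_intervalIntegral hf hab hψ ⟨has, hsh.trans hsb⟩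
    ⟨has.trans hsh, hsb⟩
  rw [intervalIntegral.integral_sub hΦ intervalIntegrable_const, intervalIntegral.integral_const,
    add_sub_cancel_left, smul_eq_mul, ← hweak] at hdrift
  rw [abs_le] at hdrift htaylor ⊢
  constructor <;> linarith

theorem eulerConsistent (hf : LipschitzWith Λ (Function.uncurry fun x μ => f x μ u))
    (hab : a < b) (hm : SolvesCE f u m a b) :
    EulerConsistent (fun t x => f x (m t) u) (fun t => (m t).1) a b := fun η hη => by
  let L : P2 d → ℝ := fun μ => (‖f 0 μ u‖ + 3 * Λ) * (1 + varsigma2 μ)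
  let D : P2 d → ℝ := fun μ => ((‖f 0 μ u‖ + Λ) * (1 + varsigma2 μ)) ^ 2
  have hL₀ : ∀ μ, 0 ≤ L μ := fun μ =>
    mul_nonneg (by positivity) (add_nonneg zero_le_one (varsigma2_nonneg μ))
  have hD₀ : ∀ μ, 0 ≤ D μ := fun μ => sq_nonneg _
  have hLD : Continuous fun μ => L μ + D μ + 1 := by
    have hf₀ : Continuous fun μ => f 0 μ u := hf.continuous.comp (Continuous.prodMk_right 0)
    have hς := (lipschitzWith_varsigma2 (d := d)).continuous
    fun_prop
  obtain ⟨K, hK⟩ := isCompact_Icc.exists_bound_of_continuousOn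
    (hLD.comp_continuousOn hm.continuousOn)
  replace hK : ∀ t ∈ Icc a b, L (m t) + D (m t) + 1 ≤ K := fun t ht =>
    (le_abs_self _).trans (hK t ht)
  have hK₀ : 0 < K := by
    linarith [hK a (left_mem_Icc.2 hab.le), hL₀ (m a), hD₀ (m a)]
  obtain ⟨δ, hδ, hmod⟩ := Metric.uniformContinuousOn_iff.1
    (isCompact_Icc.uniformContinuousOn_of_continuous hm.continuousOn) (η / (2 * K)) (by positivity)
  refine ⟨min δ (η / (2 * K)), by positivity, fun s h has hsb hh ψ A M hψ => ?_⟩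
  have hs : s ∈ Icc a b := ⟨has, (le_add_of_nonneg_right h.2).trans hsb⟩
  have hρ : ∀ r ∈ Icc s (s + h), W2 (m s) (m r) ≤ η / (2 * K) := fun r hr => by
    refine (hmod s hs r ⟨has.trans hr.1, hr.2.trans hsb⟩ ?_).le
    rw [Real.dist_eq, abs_sub_comm, abs_of_nonneg (sub_nonneg.2 hr.1)]
    linarith [hr.2, lt_min_iff.1 hh]
  calc _ ≤ h * M * (L (m s) * (η / (2 * K)) + h * D (m s)) :=
        hm.abs_integral_sub_integral_comp_add_smul_le hf hab hψ has hsb hρ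
    _ ≤ h * M * (K * (η / (2 * K)) + η / (2 * K) * K) := by
        gcongr
        · linarith [hK s hs, hD₀ (m s)]
        · exact (lt_min_iff.1 hh).2.le
        · linarith [hK s hs, hL₀ (m s)]
    _ = h * (η * M) := by
        field_simp
        ring

theorem hasLaw_of_isLagrangianFlow {Ω : Type*} [MeasurableSpace Ω] {P : Measure Ω}
    [IsProbabilityMeasure P] {ξ : ℝ → Lp (Ed d) 2 P}
    {hf : LipschitzWith Λ (Function.uncurry fun x μ => f x μ u)}
    (hab : a < b) (hm : SolvesCE f u m a b) (hξ : IsLagrangianFlow hf m ξ a b)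
    (hξa : HasLaw (ξ a) (m a).1 P) {t : ℝ} (ht : t ∈ Icc a b) : HasLaw (ξ t) (m t).1 P := by
  have hmeas : ∀ r, AEMeasurable (ξ r) P := fun r => (Lp.aestronglyMeasurable (ξ r)).aemeasurable
  have : ∀ r, IsProbabilityMeasure (m r).1 := fun r => (m r).2.1
  have : ∀ r, IsProbabilityMeasure (P.map (ξ r)) := fun r =>
    Measure.isProbabilityMeasure_map (hmeas r)
  exact ⟨hmeas t, (hξ.eulerConsistent_map hm.continuousOn).eq (hm.eulerConsistent hf hab)
    hξa.map_eq (fun r => lipschitzWith_apply_left hf (m r)) ht⟩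

theorem exists_isLagrangianFlow (hf : LipschitzWith Λ (Function.uncurry fun x μ => f x μ u))
    (hab : a < b) (hm : SolvesCE f u m a b) :
    ∃ (P : Measure (Ed d)) (_ : IsProbabilityMeasure P) (ξ : ℝ → Lp (Ed d) 2 P),
      IsLagrangianFlow hf m ξ a b ∧ ∀ t ∈ Icc a b, HasLaw (ξ t) (m t).1 P := by
  have := (m a).2.1
  obtain ⟨ξ, hξa, hξ⟩ := _root_.exists_isLagrangianFlow hf hab.le hm.continuousOn (m a).idLp
  exact ⟨(m a).1, this, ξ, hξ, fun t ht =>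
    hm.hasLaw_of_isLagrangianFlow hab hξ (hξa ▸ (m a).hasLaw_idLp) ht⟩

end SolvesCE

end WeakSolutions

section MomentEstimates

open ProbabilityTheory

theorem gronwallBound_le {δ K ε x : ℝ} (hK : 0 ≤ K) (hε : 0 ≤ ε) :
    gronwallBound δ K ε x ≤ (δ + ε * x) * Real.exp (K * x) := by
  rcases hK.eq_or_lt with rfl | hK
  · rw [gronwallBound_K0, zero_mul, Real.exp_zero, mul_one]
  · have hexp : Real.exp (K * x) - 1 ≤ K * x * Real.exp (K * x) := by
      have h := mul_le_mul_of_nonneg_right (Real.add_one_le_exp (-(K * x)))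
        (Real.exp_pos (K * x)).le
      rw [← Real.exp_add, neg_add_cancel, Real.exp_zero] at h
      linarith
    calc gronwallBound δ K ε x = δ * Real.exp (K * x) + ε / K * (Real.exp (K * x) - 1) :=
          congrFun (gronwallBound_of_K_ne_0 hK.ne') x
      _ ≤ δ * Real.exp (K * x) + ε / K * (K * x * Real.exp (K * x)) := by gcongr
      _ = (δ + ε * x) * Real.exp (K * x) := by
        field_simp

variable {d : ℕ} {U : Type*} {f : Ed d → P2 d → U → Ed d} {u : U} {m : ℝ → P2 d} {a b : ℝ}
  {Λ : ℝ≥0} {C₁ : ℝ}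

theorem lipschitzWith_uncurry_of_norm_sub_le {g : Ed d → P2 d → Ed d} {C₀ : ℝ}
    (hg : ∀ x y μ ν, ‖g x μ - g y ν‖ ≤ C₀ * (‖x - y‖ + W2 μ ν)) :
    LipschitzWith (C₀.toNNReal * 2) g.uncurry :=
  LipschitzWith.of_dist_le_mul fun p q => by
    rw [dist_eq_norm, NNReal.coe_mul, mul_assoc]
    refine (hg _ _ _ _).trans (mul_le_mul (Real.le_coe_toNNReal C₀) ?_
      (add_nonneg (norm_nonneg _) (W2_nonneg _ _)) (NNReal.coe_nonneg _))
    rw [NNReal.coe_ofNat, two_mul, ← dist_eq_norm]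
    exact add_le_add (le_max_left _ _) (le_max_right _ _)

theorem norm_superposition_le_of_hasLaw {Ω : Type*} [MeasurableSpace Ω] {P : Measure Ω}
    [IsProbabilityMeasure P] {g : Ed d → P2 d → Ed d} (hg : LipschitzWith Λ g.uncurry)
    (hC₁ : 0 ≤ C₁) (hgrowth : ∀ x μ, ‖g x μ‖ ≤ C₁ * (1 + ‖x‖ + varsigma2 μ)) {X : Lp (Ed d) 2 P}
    {μ : P2 d} (hX : HasLaw X μ.1 P) :
    ‖superposition (lipschitzWith_apply_left hg μ) X‖ ≤ 2 * C₁ * ‖X‖ + C₁ := by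
  have h := norm_superposition_le (lipschitzWith_apply_left hg μ) hC₁ (c := 1 + varsigma2 μ)
    (add_nonneg zero_le_one (varsigma2_nonneg μ))
    (fun x => (hgrowth x μ).trans_eq (by rw [add_right_comm])) X
  rw [varsigma2_eq_norm hX] at h
  linarith

namespace SolvesCE

theorem varsigma2_le (hf : LipschitzWith Λ (Function.uncurry fun x μ => f x μ u)) (hC₁ : 0 ≤ C₁)
    (hgrowth : ∀ x μ, ‖f x μ u‖ ≤ C₁ * (1 + ‖x‖ + varsigma2 μ)) (hab : a < b)
    (hm : SolvesCE f u m a b) {t : ℝ} (ht : t ∈ Icc a b) :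
    varsigma2 (m t) ≤ (varsigma2 (m a) + C₁ * (t - a)) * Real.exp (2 * C₁ * (t - a)) := by
  obtain ⟨P, _, ξ, hξ, hlaw⟩ := hm.exists_isLagrangianFlow hf hab
  rw [varsigma2_eq_norm (hlaw t ht), varsigma2_eq_norm (hlaw a (left_mem_Icc.2 hab.le))]
  refine (norm_le_gronwallBound_of_norm_deriv_right_le
    (f' := fun r => superposition (lipschitzWith_apply_left hf (m r)) (ξ r)) hξ.continuousOn
    (fun r hr => ?_) le_rfl (fun r hr => ?_) t ht).trans (gronwallBound_le (by positivity) hC₁)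
  · exact (hξ r (Ico_subset_Icc_self hr)).mono_of_mem_nhdsWithin (Icc_mem_nhdsGE_of_mem hr)
  · exact norm_superposition_le_of_hasLaw hf hC₁ hgrowth (hlaw r (Ico_subset_Icc_self hr))

theorem W2_le (hf : LipschitzWith Λ (Function.uncurry fun x μ => f x μ u)) (hC₁ : 0 ≤ C₁)
    (hgrowth : ∀ x μ, ‖f x μ u‖ ≤ C₁ * (1 + ‖x‖ + varsigma2 μ)) (hab : a < b)
    (hm : SolvesCE f u m a b) {δ t : ℝ} (hδ : b - a ≤ δ) (ht : t ∈ Icc a b) :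
    W2 (m a) (m t) ≤
      C₁ * (1 + 2 * (C₁ * δ + varsigma2 (m a)) * Real.exp (2 * C₁ * δ)) * (t - a) := by
  obtain ⟨P, _, ξ, hξ, hlaw⟩ := hm.exists_isLagrangianFlow hf hab
  have hvel : ∀ r ∈ Icc a b, ‖superposition (lipschitzWith_apply_left hf (m r)) (ξ r)‖ ≤
      C₁ * (1 + 2 * (C₁ * δ + varsigma2 (m a)) * Real.exp (2 * C₁ * δ)) := fun r hr => by
    have hς := hm.varsigma2_le hf hC₁ hgrowth hab hr
    have hrδ : r - a ≤ δ := by linarith [hr.2]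
    have hra : 0 ≤ r - a := sub_nonneg.2 hr.1
    have hς₀ := varsigma2_nonneg (m a)
    calc _ ≤ 2 * C₁ * varsigma2 (m r) + C₁ := by
          rw [varsigma2_eq_norm (hlaw r hr)]
          exact norm_superposition_le_of_hasLaw hf hC₁ hgrowth (hlaw r hr)
      _ ≤ 2 * C₁ * ((varsigma2 (m a) + C₁ * δ) * Real.exp (2 * C₁ * δ)) + C₁ := by
          refine add_le_add_left (mul_le_mul_of_nonneg_left (hς.trans ?_) (by positivity)) _
          gcongr
          exact add_nonneg hς₀ (mul_nonneg hC₁ (hra.trans hrδ))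
      _ = _ := by ring
  have ha := left_mem_Icc.2 hab.le
  have hdisp := (convex_Icc a b).norm_image_sub_le_of_norm_hasDerivWithin_le hξ hvel ha ht
  rw [Real.norm_of_nonneg (sub_nonneg.2 ht.1)] at hdisp
  rw [W2_comm]
  exact (W2_le_norm_sub (hlaw t ht) (hlaw a ha)).trans hdisp

theorem W2_lt_C2const_mul (hf : LipschitzWith Λ (Function.uncurry fun x μ => f x μ u))
    (hC₁ : 0 < C₁) (hgrowth : ∀ x μ, ‖f x μ u‖ ≤ C₁ * (1 + ‖x‖ + varsigma2 μ)) (hab : a < b)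
    (hm : SolvesCE f u m a b) {δ R t : ℝ} {mhat : P2 d} (hδ : b - a ≤ δ)
    (hR : W2 mhat (m a) ≤ R) (ht : t ∈ Icc a b) :
    W2 (m a) (m t) < C2const C₁ δ (varsigma2 mhat) R * (b - a) := by
  have hδ₀ : 0 < δ := (sub_pos.2 hab).trans_le hδ
  have hς : varsigma2 (m a) ≤ varsigma2 mhat + R := by
    have h := lipschitzWith_varsigma2.le_add_mul (m a) mhat
    rw [NNReal.coe_one, one_mul, dist_comm] at h
    exact h.trans (add_le_add_right hR _)
  have hς₀ := varsigma2_nonneg (m a)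
  let B := 1 + 2 * (C₁ * δ + varsigma2 mhat + R) * Real.exp (2 * C₁ * δ)
  have hB : 1 + 2 * (C₁ * δ + varsigma2 (m a)) * Real.exp (2 * C₁ * δ) ≤ B := by
    simp only [B, add_assoc]
    gcongr
  have hB₀ : 0 < B := lt_of_lt_of_le (by positivity) hB
  calc W2 (m a) (m t) ≤ _ := hm.W2_le hf hC₁.le hgrowth hab hδ ht
    _ ≤ C₁ * B * (b - a) := by
        gcongr
        · exact sub_nonneg.2 ht.1
        · exact ht.2
    _ < C₁ * Real.exp (C₁ * δ) * B * (b - a) := by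
        have hexp : 1 < Real.exp (C₁ * δ) := Real.one_lt_exp_iff.2 (mul_pos hC₁ hδ₀)
        have : 0 < b - a := sub_pos.2 hab
        gcongr
        exact lt_mul_of_one_lt_right hC₁ hexp

theorem W2_lt_two_mul (hf : LipschitzWith Λ (Function.uncurry fun x μ => f x μ u))
    (hC₁ : 0 < C₁) (hgrowth : ∀ x μ, ‖f x μ u‖ ≤ C₁ * (1 + ‖x‖ + varsigma2 μ)) (hab : a < b)
    (hm : SolvesCE f u m a b) {δ q R t : ℝ} {mhat : P2 d} (hδ : b - a ≤ δ)
    (hbq : b - a ≤ q / C2const C₁ δ (varsigma2 mhat) R) (haq : W2 mhat (m a) ≤ q)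
    (hR : W2 mhat (m a) ≤ R) (ht : t ∈ Icc a b) : W2 mhat (m t) < 2 * q := by
  have hlt := hm.W2_lt_C2const_mul hf hC₁ hgrowth hab hδ hR ht
  have hC₂ : 0 < C2const C₁ δ (varsigma2 mhat) R :=
    pos_of_mul_pos_left ((W2_nonneg _ _).trans_lt hlt) (sub_nonneg.2 hab.le)
  rw [le_div_iff₀ hC₂] at hbq
  linarith [W2_triangle mhat (m a) (m t)]

end SolvesCE

end MomentEstimates

section Invariance

variable {d : ℕ} {U : Type*} {f : Ed d → P2 d → U → Ed d} {mhat : P2 d} {φ : P2 d → ℝ}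

theorem mem_GsetK_of_W2_lt_Rfun (hφ : ∀ ν, 0 ≤ φ ν) (κ : ℝ) {R : ℝ} {μ : P2 d}
    (h : W2 mhat μ < Rfun mhat φ R) : μ ∈ GsetK mhat φ κ R := by
  have hne : {r : ℝ | 0 ≤ r ∧ ballW mhat r ⊆ Gset mhat φ R}.Nonempty := by
    by_contra hempty
    rw [Rfun, not_nonempty_iff_eq_empty.1 hempty, Real.sSup_empty] at h
    exact h.not_ge (W2_nonneg mhat μ)
  obtain ⟨r, hr, hμr⟩ := exists_lt_of_lt_csSup hne h
  have hbdd : BddBelow (range fun ν => φ ν + 1 / (2 * κ ^ 2) * W2 μ ν ^ 2) :=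
    ⟨0, forall_mem_range.2 fun ν => add_nonneg (hφ ν) (by positivity)⟩
  calc infConv φ κ μ ≤ φ μ + 1 / (2 * κ ^ 2) * W2 μ μ ^ 2 := ciInf_le hbdd μ
    _ = φ μ := by rw [W2_self, zero_pow two_ne_zero, mul_zero, add_zero]
    _ ≤ Ifun mhat φ R / 2 := hr.2 hμr.le

theorem IsPartition.exists_mem_Icc {θ : ℕ → ℝ} (hθ : IsPartition θ) {t : ℝ} (ht : 0 ≤ t) :
    ∃ j, t ∈ Icc (θ j) (θ (j + 1)) := by
  obtain ⟨hzero, -, htop⟩ := hθ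
  have hex : ∃ n, t < θ n := (htop.eventually_gt_atTop t).exists
  classical
  have hpos : Nat.find hex ≠ 0 := fun h => by
    have hlt := Nat.find_spec hex
    rw [h, hzero] at hlt
    exact hlt.not_ge ht
  obtain ⟨j, hj⟩ := Nat.exists_eq_succ_of_ne_zero hpos
  refine ⟨j, not_lt.1 (Nat.find_min hex (by rw [hj]; exact j.lt_succ_self)), ?_⟩
  rw [← Nat.succ_eq_add_one, ← hj]
  exact (Nat.find_spec hex).le

theorem SolvesCE.comp_add_right {u : U} {m : ℝ → P2 d} {a b : ℝ} (hm : SolvesCE f u m a b) :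
    SolvesCE f u (fun r => m (r + a)) 0 (b - a) := by
  refine ⟨fun t ht η hη => ?_, fun χ hχ hcompact hsupp => ?_⟩
  · obtain ⟨δ, hδ, hball⟩ := hm.1 (t + a) ⟨by linarith [ht.1], by linarith [ht.2]⟩ η hη
    exact ⟨δ, hδ, fun s hs hst => hball (s + a) ⟨by linarith [hs.1], by linarith [hs.2]⟩
      (by rwa [add_sub_add_right_eq_sub])⟩
  let shift : Ed d × ℝ ≃ₜ Ed d × ℝ := (Homeomorph.refl _).prodCongr (Homeomorph.subRight a)
  have hsupp_shift : tsupport (χ ∘ shift) ⊆ univ ×ˢ Ioo a b := fun p hp => by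
    have hlt : 0 < p.2 - a ∧ p.2 - a < b - a :=
      (hsupp (tsupport_comp_subset_preimage χ shift.continuous hp)).2
    exact ⟨mem_univ _, sub_pos.1 hlt.1, (sub_lt_sub_iff_right a).1 hlt.2⟩
  have hweak := hm.2 (χ ∘ shift)
    (hχ.comp (contDiff_fst.prodMk (contDiff_snd.sub contDiff_const)))
    (hcompact.comp_homeomorph shift) hsupp_shift
  have hsubst := intervalIntegral.integral_comp_sub_right (a := a) (b := b)
    (fun t => ∫ x, (deriv (fun s => χ (x, s)) t +
      fderiv ℝ (fun y => χ (y, t)) x (f x (m (t + a)) u)) ∂(m (t + a)).1) a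
  rw [sub_self] at hsubst
  rw [← hsubst, ← hweak]
  simp only [sub_add_cancel, ← deriv_comp_sub_const]
  rfl

theorem IsTraj.mem_of_forall_step {k : P2 d → U} {θ : ℕ → ℝ} {mstar : P2 d} {m : ℝ → P2 d}
    (hm : IsTraj f k θ mstar m) (hθ : IsPartition θ) {s : Set (P2 d)} (hmstar : mstar ∈ s)
    (hstep : ∀ j, m (θ j) ∈ s → ∀ t ∈ Icc (θ j) (θ (j + 1)), m t ∈ s) {t : ℝ} (ht : 0 ≤ t) :
    m t ∈ s := by
  have hnode : ∀ j, m (θ j) ∈ s := fun j => by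
    induction j with
    | zero => rwa [hθ.1, hm.1]
    | succ j ih => exact hstep j ih _ (right_mem_Icc.2 (hθ.2.1 j.lt_succ_self).le)
  obtain ⟨j, hj⟩ := hθ.exists_mem_Icc ht
  exact hstep j (hnode j) t hj

end Invariance

theorem statement16_general {d : ℕ} {U : Type*} (f : Ed d → P2 d → U → Ed d) (C₀ C₁ : ℝ)
    (hC₁ : 0 < C₁)
    (hLip : ∀ (x y : Ed d) (μ ν : P2 d) (u : U),
      ‖f x μ u - f y ν u‖ ≤ C₀ * (‖x - y‖ + W2 μ ν))
    (hgrowth : ∀ (x : Ed d) (μ : P2 d) (u : U), ‖f x μ u‖ ≤ C₁ * (1 + ‖x‖ + varsigma2 μ))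
    (mhat : P2 d) (φ : P2 d → ℝ) (hφ : ∀ μ, 0 ≤ φ μ) (q Q κ' κ δ : ℝ)
    (hqQ : 2 * q ≤ Rfun mhat φ Q)
    (hq : GsetK mhat φ κ' q ⊆ ballW mhat q) (hQ : GsetK mhat φ κ Q ⊆ ballW mhat Q)
    (k : P2 d → U)
    (hk : ∀ m₀ ∈ GsetK mhat φ κ Q \ GsetK mhat φ κ' q, ∀ τ : ℝ, 0 < τ → τ ≤ δ →
      ∀ m : ℝ → P2 d, SolvesCE f (k m₀) m 0 τ → m 0 = m₀ →
        ∀ t ∈ Icc (0 : ℝ) τ, m t ∈ GsetK mhat φ κ Q)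
    (θ : ℕ → ℝ) (hθ : IsPartition θ)
    (hstep : ∀ j, θ (j + 1) - θ j ≤ min δ (q / C2const C₁ δ (varsigma2 mhat) Q))
    (mstar : P2 d) (hmstar : mstar ∈ GsetK mhat φ κ Q)
    (m : ℝ → P2 d) (hm : IsTraj f k θ mstar m) (t : ℝ) (ht : 0 ≤ t) :
    m t ∈ GsetK mhat φ κ Q := by
  refine hm.mem_of_forall_step hθ hmstar (fun j hj t ht => ?_) ht
  have hlt : θ j < θ (j + 1) := hθ.2.1 j.lt_succ_self
  obtain ⟨hδ, hbq⟩ := le_min_iff.1 (hstep j)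
  by_cases hinner : m (θ j) ∈ GsetK mhat φ κ' q
  · have hLip' := lipschitzWith_uncurry_of_norm_sub_le fun x y μ ν => hLip x y μ ν (k (m (θ j)))
    have hW2 : W2 mhat (m t) < 2 * q := (hm.2 j).W2_lt_two_mul hLip' hC₁
      (fun x μ => hgrowth x μ _) hlt hδ hbq (hq hinner) (hQ hj) ht
    exact mem_GsetK_of_W2_lt_Rfun hφ κ (hW2.trans_le hqQ)
  · have hshift := hk _ ⟨hj, hinner⟩ _ (sub_pos.2 hlt) hδ _ (hm.2 j).comp_add_right
      (by rw [zero_add]) (t - θ j) ⟨sub_nonneg.2 ht.1, sub_le_sub_right ht.2 _⟩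
    rwa [sub_add_cancel] at hshift

/-- invariance of `G_{Q_i}^{κ_i}` under the global feedback `k̂`. -/
theorem statement16 {d : ℕ} {U : Type*} [MetricSpace U] [CompactSpace U]
    (f : Ed d → P2 d → U → Ed d) (C₀ C₁ : ℝ) (hC₀ : 0 < C₀) (hC₁ : 0 < C₁)
    (hcont : ∀ (x : Ed d) (μ : P2 d), Continuous fun u : U => f x μ u)
    (hLip : ∀ (x y : Ed d) (μ ν : P2 d) (u : U),
      ‖f x μ u - f y ν u‖ ≤ C₀ * (‖x - y‖ + W2 μ ν))
    (hgrowth : ∀ (x : Ed d) (μ : P2 d) (u : U), ‖f x μ u‖ ≤ C₁ * (1 + ‖x‖ + varsigma2 μ))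
    (mhat : P2 d) (φ : P2 d → ℝ) (hφ : UCmem mhat φ)
    (Q : ℤ → ℝ) (hQpos : ∀ i : ℤ, 0 < Q i)
    (hQR : ∀ i : ℤ, 2 * Q i ≤ Rfun mhat φ (Q (i + 1)))
    (κs : ℤ → ℝ) (hκs : ∀ i : ℤ, κs i ∈ Ioc (0 : ℝ) 1)
    (hGB : ∀ i : ℤ, GsetK mhat φ (κs i) (Q i) ⊆ ballW mhat (Q i))
    (hcover : (⋃ i : ℤ,
        (GsetK mhat φ (κs (i + 1)) (Q (i + 1)) \ GsetK mhat φ (κs i) (Q i)))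
      ∪ {mhat} = (univ : Set (P2 d)))
    (δs : ℤ → ℝ) (hδs : ∀ i : ℤ, 0 < δs i)
    (ks : ℤ → P2 d → U)
    (hks : ∀ i : ℤ,
      ∀ m₀ ∈ GsetK mhat φ (κs i) (Q i) \ GsetK mhat φ (κs (i - 1)) (Q (i - 1)),
      ∀ τ : ℝ, 0 < τ → τ ≤ δs i → ∀ mc : ℝ → P2 d, SolvesCE f (ks i m₀) mc 0 τ →
        mc 0 = m₀ → ∀ t ∈ Icc (0 : ℝ) τ, mc t ∈ GsetK mhat φ (κs i) (Q i))
    (u₀ : U) (khat : P2 d → U)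
    (hkhat : ∀ i : ℤ,
      ∀ mm ∈ GsetK mhat φ (κs i) (Q i) \ GsetK mhat φ (κs (i - 1)) (Q (i - 1)),
      khat mm = ks i mm)
    (hkhat0 : khat mhat = u₀)
    (i : ℤ) (δhat : ℝ) (hδhat : 0 < δhat)
    (hδhat2 : δhat < min (δs i) (Q (i - 1) / C2const C₁ (δs i) (varsigma2 mhat) (Q i)))
    (θ : ℕ → ℝ) (hθ : IsPartition θ)
    (hstep : StepIn θ δhat (min (δs i) (Q (i - 1) / C2const C₁ (δs i) (varsigma2 mhat) (Q i))))
    (mstar : P2 d) (hmstar : mstar ∈ GsetK mhat φ (κs i) (Q i))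
    (m : ℝ → P2 d) (hm : IsTraj f khat θ mstar m) :
    ∀ t : ℝ, 0 ≤ t → m t ∈ GsetK mhat φ (κs i) (Q i) := by
  exact fun t ht => statement16_general f C₀ C₁ hC₁ hLip hgrowth mhat φ hφ.nonneg (Q (i - 1)) (Q i)
    (κs (i - 1)) (κs i) (δs i) (by simpa using hQR (i - 1)) (hGB (i - 1)) (hGB i) khat
    (fun m₀ hm₀ => hkhat i m₀ hm₀ ▸ hks i m₀ hm₀) θ hθ (fun j => (hstep j).2) mstar hmstar m hm t ht
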